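/- arXiv:math/0504137 — 5 statements merged into one kernel-verified Lean document; each statement's English description precedes it below -/
import Mathlib

section
/- Let Ω, Ω' be bounded open subsets of ℝⁿ with smooth boundary, uniformly strictly c-convex (respectively c*-convex) with respect to each other, and let c satisfy conditions A0, A1, A2. Suppose condition Aw is violated, i.e., there exist (x₀,y₀) ∈ Ω×Ω' and orthogonal vectors ξ, ν ∈ ℝⁿ with 𝔖_c(x₀,y₀)(ξ,ν) < 0. Then there exist probability measures μ₀ on cl(Ω) and μ₁ on cl(Ω'), each having a C^∞ strictly positive density with respect to Lebesgue measure, such that there exists no C¹ c-convex potential φ on Ω with G_{φ#}μ₀ = μ₁. -/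
open Set Filter Topology MeasureTheory Metric Bornology
open scoped RealInnerProductSpace ENNReal NNReal Topology

noncomputable section

/-- Euclidean space ℝⁿ. -/
abbrev Euc (n : ℕ) := EuclideanSpace ℝ (Fin n)

variable {n : ℕ}

/-- Gradient of the cost in the first variable: ∇ₓc(x,y). -/
noncomputable def gradx (c : Euc n → Euc n → ℝ) (x y : Euc n) : Euc n :=
  gradient (fun x' => c x' y) x

/-- Gradient of the cost in the second variable: ∇_y c(x,y). -/
noncomputable def grady (c : Euc n → Euc n → ℝ) (x y : Euc n) : Euc n :=
  gradient (fun y' => c x y') y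

/-- Condition A0: the cost is C⁴ on a neighborhood of cl(Ω) × cl(Ω'). -/
def CondA0 (c : Euc n → Euc n → ℝ) (Ω Ω' : Set (Euc n)) : Prop :=
  ∃ U : Set (Euc n × Euc n), IsOpen U ∧ closure Ω ×ˢ closure Ω' ⊆ U ∧
    ContDiffOn ℝ 4 (fun p => c p.1 p.2) U

/-- Condition A1: for every x ∈ cl(Ω), y ↦ −∇ₓc(x,y) is injective on cl(Ω') with convex image. -/
def CondA1 (c : Euc n → Euc n → ℝ) (Ω Ω' : Set (Euc n)) : Prop :=
  ∀ x ∈ closure Ω, Set.InjOn (fun y => -gradx c x y) (closure Ω') ∧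
    Convex ℝ ((fun y => -gradx c x y) '' closure Ω')

/-- Condition A2: det D²ₓᵧ c (x,y) ≠ 0 on cl(Ω) × cl(Ω'). -/
def CondA2 (c : Euc n → Euc n → ℝ) (Ω Ω' : Set (Euc n)) : Prop :=
  ∀ x ∈ closure Ω, ∀ y ∈ closure Ω',
    LinearMap.det ((fderiv ℝ (fun y' => gradx c x y') y : Euc n →L[ℝ] Euc n) :
      Euc n →ₗ[ℝ] Euc n) ≠ 0

/-- c-transform φᶜ(y) = sup_{x ∈ Ω} (−c(x,y) − φ(x)). -/
def ctransform (c : Euc n → Euc n → ℝ) (Ω : Set (Euc n)) (φ : Euc n → ℝ) (y : Euc n) : ℝ :=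
  sSup ((fun x => -c x y - φ x) '' Ω)

/-- c*-transform ψᶜ*(x) = sup_{y ∈ Ω'} (−c(x,y) − ψ(y)). -/
def cstarTransform (c : Euc n → Euc n → ℝ) (Ω' : Set (Euc n)) (ψ : Euc n → ℝ) (x : Euc n) : ℝ :=
  sSup ((fun y => -c x y - ψ y) '' Ω')

/-- φ is c-convex on Ω: it is the c*-transform of some lower semicontinuous ψ on Ω'. -/
def CConvexOn (c : Euc n → Euc n → ℝ) (Ω Ω' : Set (Euc n)) (φ : Euc n → ℝ) : Prop :=
  ∃ ψ : Euc n → ℝ, LowerSemicontinuousOn ψ Ω' ∧ ∀ x ∈ Ω, φ x = cstarTransform c Ω' ψ x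

/-- The contact set G_φ(x) = { y ∈ Ω' : φ(x) + φᶜ(y) = −c(x,y) }. -/
def contactSet (c : Euc n → Euc n → ℝ) (Ω Ω' : Set (Euc n)) (φ : Euc n → ℝ) (x : Euc n) :
    Set (Euc n) :=
  {y | y ∈ Ω' ∧ φ x + ctransform c Ω φ y = -c x y}

/-- The subdifferential ∂φ(x) (relative to Ω): p with φ(x') ≥ φ(x) + p·(x'−x) + o(|x'−x|). -/
def subdiff (Ω : Set (Euc n)) (φ : Euc n → ℝ) (x : Euc n) : Set (Euc n) :=
  {p | ∀ ε > (0:ℝ), ∀ᶠ x' in 𝓝[Ω] x, φ x + ⟪p, x' - x⟫ - ε * ‖x' - x‖ ≤ φ x'}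

/-- The c-subdifferential ∂ᶜφ(x) = { −∇ₓc(x,y) : y ∈ G_φ(x) }. -/
def csubdiff (c : Euc n → Euc n → ℝ) (Ω Ω' : Set (Euc n)) (φ : Euc n → ℝ) (x : Euc n) :
    Set (Euc n) :=
  (fun y => -gradx c x y) '' contactSet c Ω Ω' φ x

/-- S is c-convex with respect to the point x: −∇ₓc(x,S) is convex. -/
def CConvexSetWrt (c : Euc n → Euc n → ℝ) (x : Euc n) (S : Set (Euc n)) : Prop :=
  Convex ℝ ((fun y => -gradx c x y) '' S)

/-- S is c-convex with respect to the set Ω. -/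
def CConvexSet (c : Euc n → Euc n → ℝ) (Ω S : Set (Euc n)) : Prop :=
  ∀ x ∈ Ω, CConvexSetWrt c x S

/-- T is a c-exponential map for c on Ω × Ω': T x (−∇ₓc(x,y)) = y. -/
def IsCExp (c : Euc n → Euc n → ℝ) (Ω Ω' : Set (Euc n)) (T : Euc n → Euc n → Euc n) : Prop :=
  ∀ x ∈ Ω, ∀ y ∈ Ω', T x (-gradx c x y) = y

/-- The point y_θ of the c-segment [y₀,y₁]ₓ with respect to x. -/
def cseg (c : Euc n → Euc n → ℝ) (T : Euc n → Euc n → Euc n) (x y₀ y₁ : Euc n) (θ : ℝ) :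
    Euc n :=
  T x ((1 - θ) • (-gradx c x y₀) + θ • (-gradx c x y₁))

/-- The cost-sectional curvature 𝔖_c(x₀,y₀)(ξ,ν). -/
def costSecCurv (c : Euc n → Euc n → ℝ) (T : Euc n → Euc n → Euc n) (x₀ y₀ ξ ν : Euc n) : ℝ :=
  iteratedDeriv 2 (fun s : ℝ => iteratedDeriv 2
    (fun t : ℝ => -c (x₀ + t • ξ) (T x₀ (-gradx c x₀ y₀ + s • ν))) (0:ℝ)) (0:ℝ)

/-- Condition As (with constant C₀; C₀ = 0 gives condition Aw). -/
def CondAs (c : Euc n → Euc n → ℝ) (T : Euc n → Euc n → Euc n) (Ω Ω' : Set (Euc n))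
    (C₀ : ℝ) : Prop :=
  ∀ x ∈ Ω, ∀ y ∈ Ω', ∀ ξ ν : Euc n, ⟪ξ, ν⟫ = 0 →
    C₀ * ‖ξ‖ ^ 2 * ‖ν‖ ^ 2 ≤ costSecCurv c T x y ξ ν

/-- G_{φ#}μ₀ = μ₁ : some Borel selection of G_φ pushes μ₀ forward to μ₁. -/
def GradPush (c : Euc n → Euc n → ℝ) (Ω Ω' : Set (Euc n)) (φ : Euc n → ℝ)
    (μ₀ μ₁ : Measure (Euc n)) : Prop :=
  ∃ Tm : Euc n → Euc n, Measurable Tm ∧ (∀ᵐ x ∂μ₀, Tm x ∈ contactSet c Ω Ω' φ x) ∧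
    μ₀.map Tm = μ₁

/-- Ω' is uniformly strictly c-convex with respect to Ω. -/
def UnifStrictCConvex (c : Euc n → Euc n → ℝ) (Ω Ω' : Set (Euc n)) : Prop :=
  ∃ δ > (0:ℝ), ∀ x ∈ Ω, ∀ p ∈ (fun y => -gradx c x y) '' Ω',
    ∀ q ∈ (fun y => -gradx c x y) '' Ω',
      closedBall (midpoint ℝ p q) (δ * ‖p - q‖ ^ 2) ⊆ (fun y => -gradx c x y) '' Ω'

/-- Ω is uniformly strictly c*-convex with respect to Ω' (the dual statement). -/
def UnifStrictCstarConvex (c : Euc n → Euc n → ℝ) (Ω Ω' : Set (Euc n)) : Prop :=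
  ∃ δ > (0:ℝ), ∀ y ∈ Ω', ∀ p ∈ (fun x => -grady c x y) '' Ω,
    ∀ q ∈ (fun x => -grady c x y) '' Ω,
      closedBall (midpoint ℝ p q) (δ * ‖p - q‖ ^ 2) ⊆ (fun x => -grady c x y) '' Ω

/-- Ω has smooth boundary: it is the sublevel set of a smooth function with
nonvanishing gradient on the boundary. -/
def SmoothBoundary (Ω : Set (Euc n)) : Prop :=
  ∃ f : Euc n → ℝ, ContDiff ℝ (⊤ : ℕ∞) f ∧ Ω = f ⁻¹' Iio 0 ∧ ∀ x ∈ frontier Ω, gradient f x ≠ 0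

end

/-!
Where the cost-sectional curvature is negative, a `c`-segment `[y₁, y₂]` with respect to `x₀`
violates the maximum principle: its midpoint `y₀` satisfies
`c(x₀, y₀) - c(x₁, y₀) > max_i (c(x₀, yᵢ) - c(x₁, yᵢ))` for some `x₁`. Take `μ₀` concentrated near
`x₀` and `x₁`, and `μ₁` near `y₁` and `y₂`, with masses that force a potential `φ` to send points
near `x₀` both to points near `y₁` and to points near `y₂`, and some point near `x₁` to a point
near one of them, say `yᵢ`. If `φ` is `C¹`, the near-kink at `x₀` is crossed by a point `x` close
to `x₀` at which `∇φ` is close to the midpoint `-∇ₓc(x₀, y₀)`. As `φ` has contact points almost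
everywhere, one may take `x` to be in contact with some `y`, and then `y` is close to `y₀`. The
`c`-monotonicity of the contact set, applied to pairs close to `(x₀, y₀)` and `(x₁, yᵢ)`,
contradicts the inequality above.
-/

section Calculus

variable {E F G : Type*} [NormedAddCommGroup E] [NormedSpace ℝ E] [NormedAddCommGroup F]
  [NormedSpace ℝ F] [NormedAddCommGroup G] [NormedSpace ℝ G]

lemma eventually_lt_tangent_of_deriv_deriv_neg {f : ℝ → ℝ} {a : ℝ}
    (hf : ∀ᶠ s in 𝓝 a, DifferentiableAt ℝ f s) (hneg : deriv (deriv f) a < 0) :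
    ∀ᶠ s in 𝓝[≠] a, f s < f a + deriv f a * (s - a) := by
  set d := deriv f a
  set m := -deriv (deriv f) a / 4 with hm
  -- The quadratic correction makes the nonstrict second derivative test strict.
  let g : ℝ → ℝ := fun s => f s - d * (s - a) + m * (s - a) ^ 2
  have hg : ∀ᶠ s in 𝓝 a, HasDerivAt g (deriv f s - d + m * (2 * (s - a))) s := by
    filter_upwards [hf] with s hs
    have hlin : HasDerivAt (fun s => s - a) 1 s := (hasDerivAt_id s).sub_const a
    simpa using (hs.hasDerivAt.fun_sub (hlin.const_mul d)).fun_add ((hlin.fun_pow 2).const_mul m)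
  have hg' : deriv g =ᶠ[𝓝 a] fun s => deriv f s - d + m * (2 * (s - a)) :=
    hg.mono fun s hs => hs.deriv
  have hg'' : deriv (deriv g) a = deriv (deriv f) a + m * 2 := by
    rw [hg'.deriv_eq]
    have hlin : HasDerivAt (fun s => s - a) 1 a := (hasDerivAt_id a).sub_const a
    have hf' : DifferentiableAt ℝ (deriv f) a := differentiableAt_of_deriv_ne_zero hneg.ne
    simpa using ((hf'.hasDerivAt.sub_const d).fun_add ((hlin.const_mul 2).const_mul m)).deriv
  have hmax : IsLocalMax g a := isLocalMax_of_deriv_deriv_neg (by rw [hg'', hm]; linarith)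
    (by rw [hg'.self_of_nhds]; simp [d]) hg.self_of_nhds.continuousAt
  filter_upwards [nhdsWithin_le_nhds hmax, self_mem_nhdsWithin] with s hle hne
  have hga : g a = f a := by simp [g]
  have hquad : 0 < m * (s - a) ^ 2 :=
    mul_pos (by rw [hm]; linarith) (by have := sub_ne_zero.2 hne; positivity)
  simp only [hga, g] at hle
  linarith

lemma hasDerivAt_parabola (x ξ η : E) (t : ℝ) :
    HasDerivAt (fun t : ℝ => x + t • ξ + t ^ 2 • η) (ξ + (2 * t) • η) t := by
  simpa using (((hasDerivAt_id t).smul_const ξ).const_add x).fun_add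
    ((hasDerivAt_pow 2 t).smul_const η)

lemma eventually_hasDerivAt_comp_parabola {f : E → ℝ} {x : E} (hf : ContDiffAt ℝ 2 f x)
    (ξ η : E) : ∀ᶠ t in 𝓝 (0 : ℝ), HasDerivAt (fun t : ℝ => f (x + t • ξ + t ^ 2 • η))
      (fderiv ℝ f (x + t • ξ + t ^ 2 • η) (ξ + (2 * t) • η)) t := by
  have hcont : Tendsto (fun t : ℝ => x + t • ξ + t ^ 2 • η) (𝓝 0) (𝓝 x) := by
    simpa using (hasDerivAt_parabola x ξ η 0).continuousAt.tendsto
  filter_upwards [hcont.eventually (hf.eventually (by simp))] with t ht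
  exact (ht.differentiableAt two_ne_zero).hasFDerivAt.comp_hasDerivAt t
    (hasDerivAt_parabola x ξ η t)

lemma deriv_deriv_comp_parabola {f : E → ℝ} {x : E} (hf : ContDiffAt ℝ 2 f x) (ξ η : E) :
    deriv (deriv fun t : ℝ => f (x + t • ξ + t ^ 2 • η)) 0 =
      fderiv ℝ (fderiv ℝ f) x ξ ξ + 2 * fderiv ℝ f x η := by
  have hf' : HasFDerivAt (fderiv ℝ f) (fderiv ℝ (fderiv ℝ f) x) x :=
    ((hf.fderiv_right (m := 1) le_rfl).differentiableAt one_ne_zero).hasFDerivAt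
  have houter : HasDerivAt (fun t : ℝ => fderiv ℝ f (x + t • ξ + t ^ 2 • η))
      (fderiv ℝ (fderiv ℝ f) x ξ) 0 := by
    refine HasFDerivAt.comp_hasDerivAt_of_eq (y := x) 0 hf' ?_ (by simp)
    simpa using hasDerivAt_parabola x ξ η 0
  have hinner : HasDerivAt (fun t : ℝ => ξ + (2 * t) • η) ((2 : ℝ) • η) 0 := by
    simpa using (((hasDerivAt_id (0 : ℝ)).const_mul 2).smul_const η).const_add ξ
  have heq : deriv (fun t : ℝ => f (x + t • ξ + t ^ 2 • η)) =ᶠ[𝓝 0]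
      fun t => fderiv ℝ f (x + t • ξ + t ^ 2 • η) (ξ + (2 * t) • η) :=
    (eventually_hasDerivAt_comp_parabola hf ξ η).mono fun t ht => ht.deriv
  rw [heq.deriv_eq, (houter.clm_apply hinner).deriv]
  simp

lemma eventually_comp_parabola_lt {f : E → ℝ} {x ξ η : E} (hf : ContDiffAt ℝ 2 f x)
    (hcrit : fderiv ℝ f x ξ = 0)
    (hneg : fderiv ℝ (fderiv ℝ f) x ξ ξ + 2 * fderiv ℝ f x η < 0) :
    ∀ᶠ t in 𝓝[≠] (0 : ℝ), f (x + t • ξ + t ^ 2 • η) < f x := by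
  have hderiv := eventually_hasDerivAt_comp_parabola hf ξ η
  have hlt := eventually_lt_tangent_of_deriv_deriv_neg
    (hderiv.mono fun t ht => ht.differentiableAt)
    ((deriv_deriv_comp_parabola hf ξ η).trans_lt hneg)
  simpa [hderiv.self_of_nhds.deriv, hcrit] using hlt

lemma contDiffAt_of_eventually_leftInverse [CompleteSpace E] {f : E → F} {g : F → E}
    {f' : E ≃L[ℝ] F} {a : E} {k : WithTop ℕ∞} (hk : k ≠ 0) (hf : ContDiffAt ℝ k f a)
    (hf' : HasFDerivAt f (f' : E →L[ℝ] F) a) (hg : ∀ᶠ x in 𝓝 a, g (f x) = x) :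
    ContDiffAt ℝ k g (f a) :=
  (hf.to_localInverse hf' hk).congr_of_eventuallyEq
    ((hf.hasStrictFDerivAt' hf' hk).localInverse_unique hg)

lemma eventually_rightInverse_of_leftInverse [CompleteSpace E] {f : E → F} {g : F → E}
    {f' : E ≃L[ℝ] F} {a : E} (hf : HasStrictFDerivAt f (f' : E →L[ℝ] F) a)
    (hg : ∀ᶠ x in 𝓝 a, g (f x) = x) : ∀ᶠ y in 𝓝 (f a), f (g y) = y := by
  filter_upwards [hf.localInverse_unique hg, hf.eventually_right_inverse] with y hgy hy
  rwa [hgy]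

lemma contDiffAt_fderiv_fst {f : E → F → G} {x : E} {y : F} {k m : WithTop ℕ∞}
    (hf : ContDiffAt ℝ k (Function.uncurry f) (x, y)) (hm : m + 1 ≤ k) :
    ContDiffAt ℝ m (fun p : E × F => fderiv ℝ (fun x' => f x' p.2) p.1) (x, y) := by
  refine ContDiffAt.fderiv (f := fun (p : E × F) x' => f x' p.2) ?_ contDiffAt_fst hm
  exact hf.comp₂ (f₁ := Prod.snd) (f₂ := fun q => q.1.2) (x := ((x, y), x)) contDiffAt_snd
    contDiffAt_fst.snd

end Calculus

section Topology

lemma eventually_forall_mem_of_apply_eq {X Y Z : Type*} [TopologicalSpace X] [TopologicalSpace Y]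
    [TopologicalSpace Z] [T2Space Z] {f : X → Y → Z} {K U : Set Y} {x₀ : X} {y₀ : Y}
    (hK : IsCompact K) (hf : ∀ y ∈ K, ContinuousAt (Function.uncurry f) (x₀, y))
    (hinj : ∀ y ∈ K, f x₀ y = f x₀ y₀ → y = y₀) (hU : U ∈ 𝓝 y₀) :
    ∀ᶠ q in 𝓝 (x₀, f x₀ y₀), ∀ y ∈ K, f q.1 y = q.2 → y ∈ U := by
  have hfar : ∀ᶠ q in 𝓝 (x₀, f x₀ y₀), ∀ y ∈ K \ interior U, f q.1 y ≠ q.2 := by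
    refine (hK.diff isOpen_interior).eventually_forall_of_forall_eventually fun y hy => ?_
    have hne : f x₀ y ≠ f x₀ y₀ := fun h =>
      hy.2 (hinj y hy.1 h ▸ mem_interior_iff_mem_nhds.2 hU)
    have hcont : ContinuousAt (fun z : (X × Z) × Y => f z.1.1 z.2) ((x₀, f x₀ y₀), y) :=
      (hf y hy.1).comp₂ (g := Prod.fst ∘ Prod.fst) (h := Prod.snd) (x := ((x₀, f x₀ y₀), y))
        (by fun_prop) (by fun_prop)
    exact (hcont.ne_iff_eventually_ne (g := fun z => z.1.2) (by fun_prop)).1 hne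
  filter_upwards [hfar] with q hq y hyK hyq
  by_contra hyU
  exact hq y ⟨hyK, fun h => hyU (interior_subset h)⟩ hyq

end Topology

section Kink

variable {E : Type*} [NormedAddCommGroup E] [InnerProductSpace ℝ E]

lemma exists_gradient_eq_of_lt_on_sphere [ProperSpace E] {φ : E → ℝ} {x₀ z p : E} {r k : ℝ}
    (hcont : ContinuousOn φ (closedBall x₀ r)) (hdiff : DifferentiableOn ℝ φ (ball x₀ r))
    (hz : z ∈ closedBall x₀ r)
    (hlt : ∀ x ∈ sphere x₀ r, φ z - ⟪p, z - x₀⟫ + k * ‖z - x₀‖ ^ 2 <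
      φ x - ⟪p, x - x₀⟫ + k * r ^ 2) :
    ∃ x ∈ ball x₀ r, gradient φ x = p - (2 * k) • (x - x₀) := by
  let h : E → ℝ := fun x => φ x - ⟪p, x - x₀⟫ + k * ‖x - x₀‖ ^ 2
  have hh : ContinuousOn h (closedBall x₀ r) :=
    (hcont.sub (by fun_prop)).add (by fun_prop)
  obtain ⟨x, hx, hmin⟩ := (isCompact_closedBall x₀ r).exists_isMinOn ⟨z, hz⟩ hh
  have hxb : x ∈ ball x₀ r := by
    refine ball_union_sphere (x := x₀) (ε := r) ▸ hx |>.resolve_right fun hxs => ?_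
    have hhx : h x = φ x - ⟪p, x - x₀⟫ + k * r ^ 2 := by
      simp only [h, mem_sphere_iff_norm.1 hxs]
    exact (hmin hz).not_gt (hhx ▸ hlt x hxs)
  have hloc : IsLocalMin h x :=
    hmin.isLocalMin (mem_of_superset (isOpen_ball.mem_nhds hxb) ball_subset_closedBall)
  have hφ : DifferentiableAt ℝ φ x := hdiff.differentiableAt (isOpen_ball.mem_nhds hxb)
  have hsub : HasFDerivAt (fun x : E => x - x₀) (ContinuousLinearMap.id ℝ E) x :=
    (hasFDerivAt_id x).sub_const x₀
  have hzero := hloc.hasFDerivAt_eq_zero ((hφ.hasFDerivAt.sub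
    ((innerSL ℝ p).hasFDerivAt.comp x hsub)).add (hsub.norm_sq.const_mul k))
  refine ⟨x, hxb, ext_inner_right ℝ fun v => ?_⟩
  have hv : ⟪gradient φ x, v⟫ - ⟪p, v⟫ + k * (2 * ⟪x - x₀, v⟫) = 0 := by
    simpa [inner_sub_left] using DFunLike.congr_fun hzero v
  rw [inner_sub_left, real_inner_smul_left]
  linarith

lemma eventually_sphere_sub_inner_lt [CompleteSpace E] {f : E → ℝ} {g x₀ : E} {ε : ℝ}
    (hf : HasGradientAt f g x₀) (hε : 0 < ε) :
    ∀ᶠ r in 𝓝[>] (0 : ℝ), ∀ x ∈ sphere x₀ r, f x - f x₀ - ⟪g, x - x₀⟫ < ε * r := by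
  obtain ⟨δ, hδ, hball⟩ := Metric.eventually_nhds_iff_ball.1
    ((hasGradientAt_iff_isLittleO.1 hf).def (half_pos hε))
  filter_upwards [Ioo_mem_nhdsGT hδ] with r hr x hx
  have hbound := hball x (mem_ball.2 ((mem_sphere.1 hx).trans_lt hr.2))
  rw [← dist_eq_norm x, mem_sphere.1 hx] at hbound
  linarith [le_of_abs_le hbound, mul_pos hε hr.1]

end Kink

section Support

/-- The mountain `φ x + c x y - c · y` supports `φ` from below on `Ω` at `x`. For a `c`-convex `φ`
on a bounded set this is what membership of `y` in `contactSet c Ω Ω' φ x` amounts to, without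
reference to the supremum defining the `c`-transform. -/
def SupportedAt {X Y : Type*} (c : X → Y → ℝ) (Ω : Set X) (φ : X → ℝ) (x : X) (y : Y) : Prop :=
  ∀ z ∈ Ω, φ x + c x y - c z y ≤ φ z

lemma SupportedAt.add_le_add {X Y : Type*} {c : X → Y → ℝ} {Ω : Set X} {φ : X → ℝ} {x x' : X}
    {y y' : Y} (h : SupportedAt c Ω φ x y) (h' : SupportedAt c Ω φ x' y') (hx : x ∈ Ω)
    (hx' : x' ∈ Ω) : c x y + c x' y' ≤ c x' y + c x y' := by
  linarith [h x' hx', h' x hx]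

lemma eventually_not_supportedAt {X Y : Type*} [TopologicalSpace X] [TopologicalSpace Y]
    {c : X → Y → ℝ} {Ω : Set X} {x x' : X} {y y' : Y} (hx : Ω ∈ 𝓝 x) (hx' : Ω ∈ 𝓝 x')
    (hc : ∀ a ∈ ({x, x'} : Set X), ∀ b ∈ ({y, y'} : Set Y),
      ContinuousAt (Function.uncurry c) (a, b))
    (hlt : c x' y + c x y' < c x y + c x' y') :
    ∀ᶠ q in 𝓝 ((x, y), (x', y')), ∀ φ, SupportedAt c Ω φ q.1.1 q.1.2 →
      ¬ SupportedAt c Ω φ q.2.1 q.2.2 := by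
  have hcomp {f : (X × Y) × X × Y → X} {g : (X × Y) × X × Y → Y} {q} (hf : ContinuousAt f q)
      (hg : ContinuousAt g q) (hfg : ContinuousAt (Function.uncurry c) (f q, g q)) :
      ContinuousAt (fun q => c (f q) (g q)) q := hfg.comp₂ hf hg
  have hleft : ContinuousAt (fun q : (X × Y) × X × Y => c q.2.1 q.1.2 + c q.1.1 q.2.2)
      ((x, y), (x', y')) :=
    (hcomp (by fun_prop) (by fun_prop) (hc x' (by simp) y (by simp))).add
      (hcomp (by fun_prop) (by fun_prop) (hc x (by simp) y' (by simp)))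
  have hright : ContinuousAt (fun q : (X × Y) × X × Y => c q.1.1 q.1.2 + c q.2.1 q.2.2)
      ((x, y), (x', y')) :=
    (hcomp (by fun_prop) (by fun_prop) (hc x (by simp) y (by simp))).add
      (hcomp (by fun_prop) (by fun_prop) (hc x' (by simp) y' (by simp)))
  filter_upwards [hleft.eventually_lt hright hlt,
    (continuous_fst.comp continuous_fst).continuousAt hx,
    (continuous_fst.comp continuous_snd).continuousAt hx'] with q hq hqx hqx' φ h h'
  exact hq.not_ge (h.add_le_add h' hqx hqx')

variable {E F : Type*} [NormedAddCommGroup E] [InnerProductSpace ℝ E] {c : E → F → ℝ} {Ω : Set E}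

lemma SupportedAt.gradient_eq [CompleteSpace E] {φ : E → ℝ} {x : E} {y : F}
    (h : SupportedAt c Ω φ x y) (hx : Ω ∈ 𝓝 x) (hφ : DifferentiableAt ℝ φ x)
    (hc : DifferentiableAt ℝ (fun z => c z y) x) :
    gradient φ x = -gradient (fun z => c z y) x := by
  have hmin : IsLocalMin (fun z => φ z + c z y) x := by
    filter_upwards [hx] with z hz
    linarith [h z hz]
  have hzero := hmin.hasFDerivAt_eq_zero (hφ.hasFDerivAt.fun_add hc.hasFDerivAt)
  rw [gradient, gradient, ← map_neg, eq_neg_of_add_eq_zero_left hzero]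

lemma exists_supportedAt_gradient_mem [CompleteSpace E] {φ : E → ℝ} {S : Set F} {W : Set (E × E)}
    (hΩ : IsOpen Ω) (hφ : ContDiffOn ℝ 1 φ Ω)
    (hdense : Ω ⊆ closure {x ∈ Ω | ∃ y ∈ S, SupportedAt c Ω φ x y}) (hW : IsOpen W)
    (hx : ∃ x ∈ Ω, (x, gradient φ x) ∈ W) :
    ∃ x ∈ Ω, ∃ y ∈ S, SupportedAt c Ω φ x y ∧ (x, gradient φ x) ∈ W := by
  have hgrad : ContinuousOn (gradient φ) Ω :=
    (InnerProductSpace.toDual ℝ E).symm.continuous.comp_continuousOn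
      (hφ.continuousOn_fderiv_of_isOpen hΩ le_rfl)
  have hopen : IsOpen (Ω ∩ (fun x => (x, gradient φ x)) ⁻¹' W) :=
    (continuousOn_id.prodMk hgrad).isOpen_inter_preimage hΩ hW
  obtain ⟨x, hxΩ, hxW⟩ := hx
  obtain ⟨x', ⟨-, hx'W⟩, hx'Ω, y, hy, hsupp⟩ :=
    mem_closure_iff.1 (hdense hxΩ) _ hopen ⟨hxΩ, hxW⟩
  exact ⟨x', hx'Ω, y, hy, hsupp, hx'W⟩

variable [TopologicalSpace F] {x₀ : E} {y₁ y₂ : F}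

lemma eventually_supportedAt_lt_on_sphere [ProperSpace E] {p : E} {r k : ℝ} (hΩ : Ω ∈ 𝓝 x₀)
    (hr : sphere x₀ r ⊆ Ω) (hc₁ : ∀ x ∈ Ω, ContinuousAt (Function.uncurry c) (x, y₁))
    (hc₂ : ∀ x ∈ Ω, ContinuousAt (Function.uncurry c) (x, y₂))
    (hlt : ∀ x ∈ sphere x₀ r, (c x y₁ - c x₀ y₁) / 2 + (c x y₂ - c x₀ y₂) / 2 + ⟪p, x - x₀⟫ <
      k * r ^ 2) :
    ∀ᶠ q in 𝓝 ((x₀, y₁), (x₀, y₂)), ∀ φ, SupportedAt c Ω φ q.1.1 q.1.2 →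
      SupportedAt c Ω φ q.2.1 q.2.2 → ∀ x ∈ sphere x₀ r,
        φ q.1.1 - ⟪p, q.1.1 - x₀⟫ + k * ‖q.1.1 - x₀‖ ^ 2 < φ x - ⟪p, x - x₀⟫ + k * r ^ 2 := by
  have hx₀ := mem_of_mem_nhds hΩ
  have hcomp {f : ((E × F) × E × F) × E → E} {g : ((E × F) × E × F) × E → F} {z}
      (hf : ContinuousAt f z) (hg : ContinuousAt g z)
      (hfg : ContinuousAt (Function.uncurry c) (f z, g z)) :
      ContinuousAt (fun z => c (f z) (g z)) z := hfg.comp₂ hf hg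
  have hgap : ∀ᶠ q in 𝓝 ((x₀, y₁), (x₀, y₂)), ∀ x ∈ sphere x₀ r,
      (c x q.1.2 - c q.1.1 q.1.2) / 2 +
        ((c x q.2.2 - c q.2.1 q.2.2) + (c q.2.1 q.1.2 - c q.1.1 q.1.2)) / 2 <
      k * r ^ 2 - ⟪p, x - x₀⟫ + (⟪p, q.1.1 - x₀⟫ - k * ‖q.1.1 - x₀‖ ^ 2) := by
    refine (isCompact_sphere x₀ r).eventually_forall_of_forall_eventually fun x hx => ?_
    have h₁ := hcomp (z := (((x₀, y₁), (x₀, y₂)), x)) (f := fun z => z.1.1.1)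
      (g := fun z => z.1.1.2) (by fun_prop) (by fun_prop) (hc₁ x₀ hx₀)
    have h₂ := hcomp (z := (((x₀, y₁), (x₀, y₂)), x)) (f := fun z => z.1.2.1)
      (g := fun z => z.1.2.2) (by fun_prop) (by fun_prop) (hc₂ x₀ hx₀)
    have h₂₁ := hcomp (z := (((x₀, y₁), (x₀, y₂)), x)) (f := fun z => z.1.2.1)
      (g := fun z => z.1.1.2) (by fun_prop) (by fun_prop) (hc₁ x₀ hx₀)
    have hx₁ := hcomp (z := (((x₀, y₁), (x₀, y₂)), x)) (f := fun z => z.2)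
      (g := fun z => z.1.1.2) (by fun_prop) (by fun_prop) (hc₁ x (hr hx))
    have hx₂ := hcomp (z := (((x₀, y₁), (x₀, y₂)), x)) (f := fun z => z.2)
      (g := fun z => z.1.2.2) (by fun_prop) (by fun_prop) (hc₂ x (hr hx))
    refine ContinuousAt.eventually_lt
      (((hx₁.sub h₁).div_const 2).add (((hx₂.sub h₂).add (h₂₁.sub h₁)).div_const 2))
      (by fun_prop) ?_
    simpa using by linarith [hlt x hx]
  have hq₂ : ∀ᶠ q : (E × F) × E × F in 𝓝 ((x₀, y₁), (x₀, y₂)), q.2.1 ∈ Ω :=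
    (continuous_fst.comp continuous_snd).continuousAt hΩ
  filter_upwards [hgap, hq₂] with q hq hqΩ φ h₁ h₂ x hx
  linarith [hq x hx, h₁ x (hr hx), h₂ x (hr hx), h₁ q.2.1 hqΩ]

lemma eventually_exists_gradient_mem_of_supportedAt [ProperSpace E] {W : Set (E × E)}
    (hΩ : IsOpen Ω) (hx₀ : x₀ ∈ Ω) (hc₁ : ∀ x ∈ Ω, ContinuousAt (Function.uncurry c) (x, y₁))
    (hc₂ : ∀ x ∈ Ω, ContinuousAt (Function.uncurry c) (x, y₂))
    (hd₁ : DifferentiableAt ℝ (fun x => c x y₁) x₀)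
    (hd₂ : DifferentiableAt ℝ (fun x => c x y₂) x₀)
    (hW : W ∈ 𝓝 (x₀, -midpoint ℝ (gradient (fun x => c x y₁) x₀)
      (gradient (fun x => c x y₂) x₀))) :
    ∀ᶠ q in 𝓝 ((x₀, y₁), (x₀, y₂)), ∀ φ, DifferentiableOn ℝ φ Ω →
      SupportedAt c Ω φ q.1.1 q.1.2 → SupportedAt c Ω φ q.2.1 q.2.2 →
        ∃ x ∈ Ω, (x, gradient φ x) ∈ W := by
  set p := -midpoint ℝ (gradient (fun x => c x y₁) x₀) (gradient (fun x => c x y₂) x₀) with hp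
  obtain ⟨ε, hε, hεW⟩ := Metric.mem_nhds_iff.1 hW
  rw [← ball_prod_same] at hεW
  have hball : ∀ᶠ r in 𝓝[>] (0 : ℝ), closedBall x₀ r ⊆ Ω :=
    nhdsWithin_le_nhds (eventually_closedBall_subset (hΩ.mem_nhds hx₀))
  obtain ⟨r, hr₁, hr₂, hrΩ, hr, hrε⟩ :=
    ((eventually_sphere_sub_inner_lt hd₁.hasGradientAt (by positivity : 0 < ε / 4)).and
      ((eventually_sphere_sub_inner_lt hd₂.hasGradientAt (by positivity : 0 < ε / 4)).and
        (hball.and (Ioo_mem_nhdsGT hε)))).exists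
  have hk : ε / (4 * r) * r ^ 2 = ε / 4 * r := by field_simp
  have hlt := eventually_supportedAt_lt_on_sphere (k := ε / (4 * r)) (p := p)
    (hΩ.mem_nhds hx₀) (sphere_subset_closedBall.trans hrΩ) hc₁ hc₂ fun x hx => by
      rw [hk, hp, midpoint_eq_smul_add, inner_neg_left, real_inner_smul_left, inner_add_left,
        invOf_eq_inv]
      linarith [hr₁ x hx, hr₂ x hx]
  have hq₁ : ∀ᶠ q : (E × F) × E × F in 𝓝 ((x₀, y₁), (x₀, y₂)), q.1.1 ∈ closedBall x₀ r :=
    (continuous_fst.comp continuous_fst).continuousAt (closedBall_mem_nhds x₀ hr)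
  filter_upwards [hlt, hq₁] with q hq hqr φ hφ h₁ h₂
  obtain ⟨x, hx, hgrad⟩ := exists_gradient_eq_of_lt_on_sphere (hφ.continuousOn.mono hrΩ)
    (hφ.mono (ball_subset_closedBall.trans hrΩ)) hqr (hq φ h₁ h₂)
  refine ⟨x, hrΩ (ball_subset_closedBall hx), hεW ⟨ball_subset_ball hrε.le hx, ?_⟩⟩
  rw [hgrad, mem_ball, dist_eq_norm, sub_sub_cancel_left, norm_neg, norm_smul,
    Real.norm_of_nonneg (by positivity)]
  calc 2 * (ε / (4 * r)) * ‖x - x₀‖ ≤ 2 * (ε / (4 * r)) * r := by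
        gcongr
        exact (mem_ball_iff_norm.1 hx).le
    _ = ε / 2 := by field_simp; norm_num
    _ < ε := half_lt_self hε

end Support

section Cost

variable {n : ℕ} {c : Euc n → Euc n → ℝ} {x y : Euc n} {k m : WithTop ℕ∞}

lemma CondA0.contDiffAt {Ω Ω' : Set (Euc n)} (hc : CondA0 c Ω Ω') (hx : x ∈ closure Ω)
    (hy : y ∈ closure Ω') : ContDiffAt ℝ 4 (Function.uncurry c) (x, y) := by
  obtain ⟨U, hU, hsub, hcU⟩ := hc
  exact hcU.contDiffAt (hU.mem_nhds (hsub ⟨hx, hy⟩))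

lemma contDiffAt_cost_fst (hc : ContDiffAt ℝ k (Function.uncurry c) (x, y)) :
    ContDiffAt ℝ k (fun x' => c x' y) x :=
  hc.comp₂ (f₁ := id) (f₂ := fun _ => y) contDiffAt_id contDiffAt_const

lemma contDiffAt_gradx (hc : ContDiffAt ℝ k (Function.uncurry c) (x, y)) (hm : m + 1 ≤ k) :
    ContDiffAt ℝ m (Function.uncurry (gradx c)) (x, y) :=
  (InnerProductSpace.toDual ℝ (Euc n)).symm.toContinuousLinearEquiv.contDiff.contDiffAt.comp (x, y)
    (contDiffAt_fderiv_fst hc hm)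

lemma contDiffAt_gradx_snd (hc : ContDiffAt ℝ k (Function.uncurry c) (x, y)) (hm : m + 1 ≤ k) :
    ContDiffAt ℝ m (gradx c x) y :=
  (contDiffAt_gradx hc hm).comp₂ (f₁ := fun _ => x) (f₂ := id) contDiffAt_const contDiffAt_id

/-- The Hessian `D²ₓₓ c(x, y)` of the cost in its first variable, as a quadratic form in `ξ`. The
cost-sectional curvature measures how it varies with `y`. -/
noncomputable def hessx (c : Euc n → Euc n → ℝ) (x y ξ : Euc n) : ℝ :=
  fderiv ℝ (fderiv ℝ fun x' => c x' y) x ξ ξ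

lemma contDiffAt_hessx_snd (hc : ContDiffAt ℝ k (Function.uncurry c) (x, y)) (hm : m + 1 + 1 ≤ k)
    (ξ : Euc n) : ContDiffAt ℝ m (fun y' => hessx c x y' ξ) y := by
  have hjoint : ContDiffAt ℝ m
      (fun p : Euc n × Euc n => fderiv ℝ (fderiv ℝ fun x' => c x' p.2) p.1) (x, y) :=
    contDiffAt_fderiv_fst (f := fun x y => fderiv ℝ (fun x' => c x' y) x)
      (contDiffAt_fderiv_fst hc hm) le_rfl
  exact ((hjoint.comp₂ (f₁ := fun _ => x) (f₂ := id) contDiffAt_const contDiffAt_id).clm_apply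
    contDiffAt_const).clm_apply contDiffAt_const

lemma iteratedDeriv_two_neg_cost (hc : ContDiffAt ℝ 2 (fun x' => c x' y) x) (ξ : Euc n) :
    iteratedDeriv 2 (fun t : ℝ => -c (x + t • ξ) y) 0 = -hessx c x y ξ := by
  have hline := deriv_deriv_comp_parabola hc ξ 0
  simp only [smul_zero, add_zero, map_zero, mul_zero] at hline
  rw [iteratedDeriv_fun_neg, iteratedDeriv_succ, iteratedDeriv_one, hline, hessx]

lemma eventually_cost_sub_parabola_lt {y₀ ξ η : Euc n}
    (hy₀ : ContDiffAt ℝ 2 (fun x' => c x' y₀) x)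
    (hy : ContDiffAt ℝ 2 (fun x' => c x' y) x) (hcrit : ⟪gradx c x y₀ - gradx c x y, ξ⟫ = 0)
    (hneg : hessx c x y₀ ξ - hessx c x y ξ + 2 * ⟪gradx c x y₀ - gradx c x y, η⟫ < 0) :
    ∀ᶠ t in 𝓝[≠] (0 : ℝ), c (x + t • ξ + t ^ 2 • η) y₀ - c (x + t • ξ + t ^ 2 • η) y <
      c x y₀ - c x y := by
  have hfderiv : fderiv ℝ (fun x' => c x' y₀ - c x' y) =ᶠ[𝓝 x]
      fun x' => fderiv ℝ (fun z => c z y₀) x' - fderiv ℝ (fun z => c z y) x' := by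
    filter_upwards [hy₀.eventually (by simp), hy.eventually (by simp)] with x' h₀ h
    exact fderiv_fun_sub (h₀.differentiableAt two_ne_zero) (h.differentiableAt two_ne_zero)
  have hsecond : fderiv ℝ (fderiv ℝ fun x' => c x' y₀ - c x' y) x ξ ξ =
      hessx c x y₀ ξ - hessx c x y ξ := by
    rw [hfderiv.fderiv_eq, fderiv_fun_sub]
    · rfl
    · exact (hy₀.fderiv_right (m := 1) le_rfl).differentiableAt one_ne_zero
    · exact (hy.fderiv_right (m := 1) le_rfl).differentiableAt one_ne_zero
  have hfirst (v : Euc n) : fderiv ℝ (fun x' => c x' y₀ - c x' y) x v =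
      ⟪gradx c x y₀ - gradx c x y, v⟫ := by
    rw [hfderiv.self_of_nhds, inner_sub_left, gradx, gradx, inner_gradient_left,
      inner_gradient_left]
    rfl
  refine eventually_comp_parabola_lt (hy₀.sub hy) ((hfirst ξ).trans hcrit) ?_
  rwa [hsecond, hfirst]

end Cost

section CExponential

variable {n : ℕ} {c : Euc n → Euc n → ℝ} {T : Euc n → Euc n → Euc n} {x₀ y₀ ξ ν : Euc n}

lemma exists_hasFDerivAt_neg_gradx_equiv (hc : ContDiffAt ℝ 2 (Function.uncurry c) (x₀, y₀))
    (hdet : (fderiv ℝ (fun y => gradx c x₀ y) y₀ : Euc n →ₗ[ℝ] Euc n).det ≠ 0) :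
    ∃ e : Euc n ≃L[ℝ] Euc n,
      HasFDerivAt (fun y => -gradx c x₀ y) (e : Euc n →L[ℝ] Euc n) y₀ := by
  have hgrad : DifferentiableAt ℝ (gradx c x₀) y₀ :=
    (contDiffAt_gradx_snd hc (m := 1) le_rfl).differentiableAt one_ne_zero
  refine ⟨(ContinuousLinearMap.toContinuousLinearEquivOfDetNeZero _ hdet).trans
    (ContinuousLinearEquiv.neg ℝ), hgrad.hasFDerivAt.fun_neg.congr_fderiv ?_⟩
  ext v
  simp

lemma contDiffAt_cexp (hc : ContDiffAt ℝ 4 (Function.uncurry c) (x₀, y₀))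
    (hdet : (fderiv ℝ (fun y => gradx c x₀ y) y₀ : Euc n →ₗ[ℝ] Euc n).det ≠ 0)
    (hT : ∀ᶠ y in 𝓝 y₀, T x₀ (-gradx c x₀ y) = y) : ContDiffAt ℝ 3 (T x₀) (-gradx c x₀ y₀) := by
  obtain ⟨e, he⟩ := exists_hasFDerivAt_neg_gradx_equiv (hc.of_le (by norm_num)) hdet
  exact contDiffAt_of_eventually_leftInverse (f := fun y => -gradx c x₀ y) (by norm_num)
    (contDiffAt_gradx_snd hc (by norm_num)).neg he hT

lemma eventually_neg_gradx_cexp (hc : ContDiffAt ℝ 2 (Function.uncurry c) (x₀, y₀))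
    (hdet : (fderiv ℝ (fun y => gradx c x₀ y) y₀ : Euc n →ₗ[ℝ] Euc n).det ≠ 0)
    (hT : ∀ᶠ y in 𝓝 y₀, T x₀ (-gradx c x₀ y) = y) :
    ∀ᶠ p in 𝓝 (-gradx c x₀ y₀), -gradx c x₀ (T x₀ p) = p := by
  obtain ⟨e, he⟩ := exists_hasFDerivAt_neg_gradx_equiv hc hdet
  exact eventually_rightInverse_of_leftInverse (f := fun y => -gradx c x₀ y)
    ((contDiffAt_gradx_snd hc (m := 1) le_rfl).neg.hasStrictFDerivAt' he one_ne_zero) hT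

lemma tendsto_add_smul_zero {E : Type*} [NormedAddCommGroup E] [NormedSpace ℝ E] (p ν : E) :
    Tendsto (fun s : ℝ => p + s • ν) (𝓝 0) (𝓝 p) := by
  simpa using (by fun_prop : Continuous fun s : ℝ => p + s • ν).tendsto 0

lemma costSecCurv_zero_right : costSecCurv c T x₀ y₀ ξ 0 = 0 := by
  simp [costSecCurv, iteratedDeriv_const]

lemma exists_eventually_hessx_lt_of_costSecCurv_neg
    (hc : ContDiffAt ℝ 4 (Function.uncurry c) (x₀, y₀))
    (hTc : ContDiffAt ℝ 3 (T x₀) (-gradx c x₀ y₀))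
    (hT : T x₀ (-gradx c x₀ y₀) = y₀) (hneg : costSecCurv c T x₀ y₀ ξ ν < 0) :
    ∃ d : ℝ, ∀ᶠ s in 𝓝[≠] (0 : ℝ),
      hessx c x₀ y₀ ξ < hessx c x₀ (T x₀ (-gradx c x₀ y₀ + s • ν)) ξ + d * s := by
  set Y : ℝ → Euc n := fun s => T x₀ (-gradx c x₀ y₀ + s • ν) with hY
  have hY₀ : Y 0 = y₀ := by simp [hY, hT]
  have hYc : ContDiffAt ℝ 3 Y 0 := by
    refine ContDiffAt.comp (g := T x₀) (0 : ℝ) ?_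
      (contDiffAt_const.add (contDiffAt_id.smul contDiffAt_const))
    simpa using hTc
  have hD : ContDiffAt ℝ 2 (fun s => -hessx c x₀ (Y s) ξ) 0 := by
    refine (ContDiffAt.comp (g := fun y => hessx c x₀ y ξ) (0 : ℝ) ?_ (hYc.of_le (by norm_num))).neg
    exact contDiffAt_hessx_snd (hY₀.symm ▸ hc) (by norm_num) ξ
  have hcurv : costSecCurv c T x₀ y₀ ξ ν = deriv (deriv fun s => -hessx c x₀ (Y s) ξ) 0 := by
    have hcY : ∀ᶠ s in 𝓝 (0 : ℝ), ContDiffAt ℝ 4 (Function.uncurry c) (x₀, Y s) :=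
      (continuousAt_const.prodMk hYc.continuousAt).tendsto.eventually
        ((hY₀.symm ▸ hc).eventually (by simp))
    have heq := hcY.mono fun s hs =>
      iteratedDeriv_two_neg_cost ((contDiffAt_cost_fst hs).of_le (by norm_num)) ξ
    rw [costSecCurv, Filter.EventuallyEq.iteratedDeriv_eq 2 heq, iteratedDeriv_succ,
      iteratedDeriv_one]
  refine ⟨deriv (fun s => -hessx c x₀ (Y s) ξ) 0, ?_⟩
  filter_upwards [eventually_lt_tangent_of_deriv_deriv_neg ((hD.eventually (by simp)).mono
    fun s hs => hs.differentiableAt two_ne_zero) (hcurv ▸ hneg)] with s hs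
  rw [hY₀] at hs
  linarith

end CExponential

section MaximumPrinciple

variable {n : ℕ} {c : Euc n → Euc n → ℝ} {T : Euc n → Euc n → Euc n} {x₀ y₀ ξ ν : Euc n}

/-- Failure of Loeper's maximum principle: `y₀` is the midpoint of the `c`-segment `[y₁, y₂]` with
respect to `x₀`, but the mountain `c(x₀, y₀) - c(·, y₀)` rises above both `c(x₀, y₁) - c(·, y₁)`
and `c(x₀, y₂) - c(·, y₂)` at `x₁`. -/
structure MaxPrincipleFails (c : Euc n → Euc n → ℝ) (x₀ x₁ y₀ y₁ y₂ : Euc n) : Prop where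
  midpoint_gradx : midpoint ℝ (gradx c x₀ y₁) (gradx c x₀ y₂) = gradx c x₀ y₀
  lt_left : c x₀ y₁ - c x₁ y₁ < c x₀ y₀ - c x₁ y₀
  lt_right : c x₀ y₂ - c x₁ y₂ < c x₀ y₀ - c x₁ y₀

lemma exists_parabola_cost_sub_lt_of_costSecCurv_neg
    (hc : ContDiffAt ℝ 4 (Function.uncurry c) (x₀, y₀))
    (hTc : ContDiffAt ℝ 3 (T x₀) (-gradx c x₀ y₀)) (hT : T x₀ (-gradx c x₀ y₀) = y₀)
    (hTinv : ∀ᶠ p in 𝓝 (-gradx c x₀ y₀), -gradx c x₀ (T x₀ p) = p) (horth : ⟪ξ, ν⟫ = 0)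
    (hneg : costSecCurv c T x₀ y₀ ξ ν < 0) :
    ∃ η : Euc n, ∀ᶠ s in 𝓝[≠] (0 : ℝ), ∀ᶠ t in 𝓝[≠] (0 : ℝ),
      c (x₀ + t • ξ + t ^ 2 • η) y₀ - c (x₀ + t • ξ + t ^ 2 • η) (T x₀ (-gradx c x₀ y₀ + s • ν)) <
        c x₀ y₀ - c x₀ (T x₀ (-gradx c x₀ y₀ + s • ν)) := by
  obtain ⟨d, hd⟩ := exists_eventually_hessx_lt_of_costSecCurv_neg hc hTc hT hneg
  have hν : ‖ν‖ ≠ 0 := by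
    rw [norm_ne_zero_iff]
    rintro rfl
    exact hneg.ne costSecCurv_zero_right
  have hline := tendsto_add_smul_zero (-gradx c x₀ y₀) ν
  have hlim := hTc.continuousAt.tendsto.comp hline
  rw [hT] at hlim
  have hcY := (tendsto_const_nhds (x := x₀)).prodMk_nhds hlim |>.eventually
    (hc.eventually (by simp))
  -- Bending the curve by `η` absorbs the linear term `d * s` of the Hessian.
  refine ⟨(-d / (2 * ‖ν‖ ^ 2)) • ν, ?_⟩
  filter_upwards [hd, nhdsWithin_le_nhds hcY, nhdsWithin_le_nhds (hline.eventually hTinv)]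
    with s hds hcs hgrad
  have hdiff : gradx c x₀ y₀ - gradx c x₀ (T x₀ (-gradx c x₀ y₀ + s • ν)) = s • ν := by
    rw [← neg_neg (gradx c x₀ (T x₀ _)), hgrad]
    abel
  refine eventually_cost_sub_parabola_lt ((contDiffAt_cost_fst hc).of_le (by norm_num))
    ((contDiffAt_cost_fst hcs).of_le (by norm_num)) ?_ ?_
  · rw [hdiff, real_inner_smul_left, real_inner_comm, horth, mul_zero]
  · have hη : 2 * ⟪s • ν, (-d / (2 * ‖ν‖ ^ 2)) • ν⟫ = -(d * s) := by
      rw [real_inner_smul_left, real_inner_smul_right, real_inner_self_eq_norm_sq]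
      field_simp
    rw [hdiff, hη]
    linarith

lemma exists_maxPrincipleFails_of_costSecCurv_neg {U V : Set (Euc n)} (hU : U ∈ 𝓝 x₀)
    (hV : V ∈ 𝓝 y₀) (hc : ContDiffAt ℝ 4 (Function.uncurry c) (x₀, y₀))
    (hdet : (fderiv ℝ (fun y => gradx c x₀ y) y₀ : Euc n →ₗ[ℝ] Euc n).det ≠ 0)
    (hT : ∀ᶠ y in 𝓝 y₀, T x₀ (-gradx c x₀ y) = y) (horth : ⟪ξ, ν⟫ = 0)
    (hneg : costSecCurv c T x₀ y₀ ξ ν < 0) :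
    ∃ x₁ ∈ U, ∃ y₁ ∈ V, ∃ y₂ ∈ V, MaxPrincipleFails c x₀ x₁ y₀ y₁ y₂ := by
  have hTc := contDiffAt_cexp hc hdet hT
  have hTinv := eventually_neg_gradx_cexp (hc.of_le (by norm_num)) hdet hT
  obtain ⟨η, hη⟩ := exists_parabola_cost_sub_lt_of_costSecCurv_neg hc hTc hT.self_of_nhds hTinv
    horth hneg
  have hTV : ∀ᶠ p in 𝓝 (-gradx c x₀ y₀), T x₀ p ∈ V :=
    hTc.continuousAt.tendsto.eventually_mem (hT.self_of_nhds.symm ▸ hV)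
  have hs := hη.and (nhdsWithin_le_nhds
    ((tendsto_add_smul_zero (-gradx c x₀ y₀) ν).eventually (hTV.and hTinv)))
  have hs_neg := (tendsto_neg_nhdsGT (a := (0 : ℝ))).eventually
    (by rw [neg_zero]; exact nhdsLT_le_nhdsNE _ hs)
  obtain ⟨s, ⟨ht₁, hy₁, hgrad₁⟩, ht₂, hy₂, hgrad₂⟩ :=
    (Eventually.and (nhdsGT_le_nhdsNE _ hs) hs_neg).exists
  have hcurve : ∀ᶠ t in 𝓝[≠] (0 : ℝ), x₀ + t • ξ + t ^ 2 • η ∈ U :=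
    nhdsWithin_le_nhds ((hasDerivAt_parabola x₀ ξ η 0).continuousAt.tendsto.eventually_mem
      (by simpa using hU))
  obtain ⟨t, hlt₁, hlt₂, htU⟩ := (ht₁.and (ht₂.and hcurve)).exists
  refine ⟨_, htU, _, hy₁, _, hy₂, ?_, by linarith, by linarith⟩
  rw [neg_eq_iff_eq_neg] at hgrad₁ hgrad₂
  rw [hgrad₁, hgrad₂, midpoint_eq_smul_add, invOf_eq_inv]
  module

end MaximumPrinciple

section Incompatibility

variable {n : ℕ} {c : Euc n → Euc n → ℝ} {Ω Ω' : Set (Euc n)} {φ : Euc n → ℝ}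
  {x y x₀ x₁ y₀ y₁ y₂ : Euc n}

lemma CondA0.isBounded_image_cost (hc : CondA0 c Ω Ω') (hΩ : IsBounded Ω) (hy : y ∈ closure Ω') :
    IsBounded ((fun x => c x y) '' Ω) := by
  have hcont : ContinuousOn (fun x => c x y) (closure Ω) := fun x hx =>
    (contDiffAt_cost_fst (hc.contDiffAt hx hy)).continuousAt.continuousWithinAt
  exact (hΩ.isCompact_closure.image_of_continuousOn hcont).isBounded.subset
    (image_mono subset_closure)

lemma CConvexOn.bddBelow_image (hφ : CConvexOn c Ω Ω' φ) (hy : y ∈ Ω')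
    (hc : BddAbove ((fun x => c x y) '' Ω)) : BddBelow (φ '' Ω) := by
  obtain ⟨ψ, -, hψ⟩ := hφ
  obtain ⟨M, hM⟩ := hc
  refine ⟨min (-M - ψ y) 0, ?_⟩
  rintro _ ⟨x, hx, rfl⟩
  rw [hψ x hx, cstarTransform]
  by_cases hb : BddAbove ((fun y => -c x y - ψ y) '' Ω')
  · have hcM : c x y ≤ M := hM ⟨x, hx, rfl⟩
    calc min (-M - ψ y) 0 ≤ -M - ψ y := min_le_left _ _
      _ ≤ -c x y - ψ y := by linarith
      _ ≤ sSup ((fun y => -c x y - ψ y) '' Ω') := le_csSup hb ⟨y, hy, rfl⟩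
  · -- An unbounded supremum takes the junk value `0`.
    rw [Real.sSup_of_not_bddAbove hb]
    exact min_le_right _ _

lemma CConvexOn.supportedAt (hφ : CConvexOn c Ω Ω' φ) (hy : y ∈ contactSet c Ω Ω' φ x)
    (hc : IsBounded ((fun x => c x y) '' Ω)) : SupportedAt c Ω φ x y := by
  obtain ⟨M, hM⟩ := hc.bddBelow
  obtain ⟨m, hm⟩ := hφ.bddBelow_image hy.1 hc.bddAbove
  have hbdd : BddAbove ((fun x => -c x y - φ x) '' Ω) := by
    refine ⟨-M - m, ?_⟩
    rintro _ ⟨z, hz, rfl⟩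
    have hcz : M ≤ c z y := hM ⟨z, hz, rfl⟩
    have hφz : m ≤ φ z := hm ⟨z, hz, rfl⟩
    simp only
    linarith
  intro z hz
  have hle : -c z y - φ z ≤ ctransform c Ω φ y := le_csSup hbdd ⟨z, hz, rfl⟩
  linarith [hy.2]

lemma exists_nhds_forall_not_supportedAt (hΩo : IsOpen Ω) (hΩ'b : IsBounded Ω')
    (hc : CondA0 c Ω Ω') (hinj : InjOn (fun y => -gradx c x₀ y) (closure Ω')) (hx₀ : x₀ ∈ Ω)
    (hx₁ : x₁ ∈ Ω) (hy₀ : y₀ ∈ closure Ω') (hy₁ : y₁ ∈ closure Ω')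
    (hlt : c x₀ y₁ - c x₁ y₁ < c x₀ y₀ - c x₁ y₀) :
    ∃ W ∈ 𝓝 (x₀, -gradx c x₀ y₀), ∀ᶠ q in 𝓝 (x₁, y₁), ∀ φ x y, y ∈ closure Ω' →
      (x, -gradx c x y) ∈ W → SupportedAt c Ω φ x y → ¬ SupportedAt c Ω φ q.1 q.2 := by
  have hcont : ∀ a ∈ ({x₀, x₁} : Set (Euc n)), ∀ b ∈ ({y₀, y₁} : Set (Euc n)),
      ContinuousAt (Function.uncurry c) (a, b) := by
    rintro a ha b hb
    refine (hc.contDiffAt (subset_closure ?_) ?_).continuousAt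
    · rcases ha with rfl | rfl <;> assumption
    · rcases hb with rfl | rfl <;> assumption
  have hincomp := eventually_not_supportedAt (hΩo.mem_nhds hx₀) (hΩo.mem_nhds hx₁) hcont
    (by linarith)
  rw [nhds_prod_eq, eventually_prod_iff] at hincomp
  obtain ⟨P, hP, Q, hQ, hPQ⟩ := hincomp
  obtain ⟨U, hU, V, hV, hUV⟩ := mem_nhds_prod_iff.1 hP
  have hexp : ∀ᶠ q in 𝓝 (x₀, -gradx c x₀ y₀), ∀ y ∈ closure Ω', -gradx c q.1 y = q.2 → y ∈ V :=
    eventually_forall_mem_of_apply_eq (f := fun x y => -gradx c x y) hΩ'b.isCompact_closure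
      (fun y hy => (contDiffAt_gradx (hc.contDiffAt (subset_closure hx₀) hy)
        (m := 3) (by norm_num)).neg.continuousAt)
      (fun y hy h => hinj hy hy₀ h) hV
  refine ⟨_, hexp.and (continuousAt_fst hU), hQ.mono ?_⟩
  intro q hq φ x y hy hxy h
  have hxyP : P (x, y) := hUV ⟨hxy.2, hxy.1 y hy rfl⟩
  exact hPQ hxyP hq φ h

lemma MaxPrincipleFails.exists_forall_not_supportedAt (h : MaxPrincipleFails c x₀ x₁ y₀ y₁ y₂)
    (hΩo : IsOpen Ω) (hΩ'b : IsBounded Ω') (hc : CondA0 c Ω Ω')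
    (hinj : InjOn (fun y => -gradx c x₀ y) (closure Ω')) (hx₀ : x₀ ∈ Ω) (hx₁ : x₁ ∈ Ω)
    (hy₀ : y₀ ∈ closure Ω') (hy₁ : y₁ ∈ closure Ω') (hy₂ : y₂ ∈ closure Ω') :
    ∃ δ > 0, ∀ φ : Euc n → ℝ, ContDiffOn ℝ 1 φ Ω →
      Ω ⊆ closure {x ∈ Ω | ∃ y ∈ closure Ω', SupportedAt c Ω φ x y} →
      (∃ x ∈ ball x₀ δ, ∃ y ∈ ball y₁ δ, SupportedAt c Ω φ x y) →
      (∃ x ∈ ball x₀ δ, ∃ y ∈ ball y₂ δ, SupportedAt c Ω φ x y) →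
      ¬ ∃ x ∈ ball x₁ δ, ∃ y ∈ ball y₁ δ ∪ ball y₂ δ, SupportedAt c Ω φ x y := by
  obtain ⟨W₁, hW₁, hsep₁⟩ := exists_nhds_forall_not_supportedAt hΩo hΩ'b hc hinj hx₀ hx₁ hy₀ hy₁
    h.lt_left
  obtain ⟨W₂, hW₂, hsep₂⟩ := exists_nhds_forall_not_supportedAt hΩo hΩ'b hc hinj hx₀ hx₁ hy₀ hy₂
    h.lt_right
  have hC {x y : Euc n} (hx : x ∈ Ω) (hy : y ∈ closure Ω') := hc.contDiffAt (subset_closure hx) hy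
  have hdiff {x y : Euc n} (hx : x ∈ Ω) (hy : y ∈ closure Ω') :
      DifferentiableAt ℝ (fun x' => c x' y) x :=
    (contDiffAt_cost_fst (hC hx hy)).differentiableAt (by norm_num)
  have hkink := eventually_exists_gradient_mem_of_supportedAt hΩo hx₀
    (fun x hx => (hC hx hy₁).continuousAt) (fun x hx => (hC hx hy₂).continuousAt)
    (hdiff hx₀ hy₁) (hdiff hx₀ hy₂) (W := interior (W₁ ∩ W₂)) (by
      change interior (W₁ ∩ W₂) ∈ 𝓝 (x₀, -midpoint ℝ (gradx c x₀ y₁) (gradx c x₀ y₂))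
      rw [h.midpoint_gradx]
      exact interior_mem_nhds.2 (inter_mem hW₁ hW₂))
  have hsmall := (eventually_ball_subset hsep₁).and
    ((eventually_ball_subset hsep₂).and (eventually_ball_subset hkink))
  obtain ⟨δ, ⟨hδ₁, hδ₂, hδ⟩, hpos⟩ :=
    ((hsmall.filter_mono nhdsWithin_le_nhds).and (self_mem_nhdsWithin (s := Ioi (0 : ℝ)))).exists
  simp only [← ball_prod_same] at hδ₁ hδ₂ hδ
  refine ⟨δ, hpos, ?_⟩
  rintro φ hφ hdense ⟨a, ha, b, hb, hab⟩ ⟨a', ha', b', hb', hab'⟩ ⟨z, hz, w, hw, hzw⟩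
  obtain ⟨x, hx, y, hy, hxy, hxW⟩ := exists_supportedAt_gradient_mem hΩo hφ hdense
    isOpen_interior (hδ (show ((a, b), (a', b')) ∈ _ from ⟨⟨ha, hb⟩, ⟨ha', hb'⟩⟩) φ
      (hφ.differentiableOn one_ne_zero) hab hab')
  rw [hxy.gradient_eq (hΩo.mem_nhds hx) ((hφ.differentiableOn one_ne_zero).differentiableAt
    (hΩo.mem_nhds hx)) (hdiff hx hy)] at hxW
  obtain ⟨hxW₁, hxW₂⟩ := interior_subset hxW
  rcases hw with hw | hw
  · exact hδ₁ (show (z, w) ∈ _ from ⟨hz, hw⟩) φ x y hy hxW₁ hxy hzw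
  · exact hδ₂ (show (z, w) ∈ _ from ⟨hz, hw⟩) φ x y hy hxW₂ hxy hzw

end Incompatibility

section Measure

variable {E : Type*} [NormedAddCommGroup E] [NormedSpace ℝ E] [FiniteDimensional ℝ E]
  [MeasurableSpace E] [BorelSpace E] {μ : Measure E} [μ.IsAddHaarMeasure]

lemma setLIntegral_normed_bump {a : E} (f : ContDiffBump a) {s : Set E}
    (hs : ball a f.rOut ⊆ s) : ∫⁻ x in s, ENNReal.ofReal (f.normed μ x) ∂μ = 1 := by
  have hsupp : Function.support (fun x => ENNReal.ofReal (f.normed μ x)) ⊆ s := by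
    intro x hx
    refine hs ((f.support_normed_eq (μ := μ)).subset fun h => hx ?_)
    simp only [h, ENNReal.ofReal_zero]
  rw [setLIntegral_eq_of_support_subset hsupp, ← ofReal_integral_eq_lintegral_ofReal
    f.integrable_normed (ae_of_all _ f.nonneg_normed), f.integral_normed, ENNReal.ofReal_one]

lemma setLIntegral_sum_normed_bump {ι : Type*} {a : ι → E} (f : ∀ i, ContDiffBump (a i))
    {w : ι → ℝ} (hw : ∀ i, 0 ≤ w i) {t : Finset ι} {s : Set E}
    (hs : ∀ i ∈ t, ball (a i) (f i).rOut ⊆ s) :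
    ∫⁻ x in s, ENNReal.ofReal (∑ i ∈ t, w i * (f i).normed μ x) ∂μ =
      ENNReal.ofReal (∑ i ∈ t, w i) := by
  have hmeas (i : ι) : Measurable fun x => ENNReal.ofReal ((f i).normed μ x) :=
    (f i).continuous_normed.measurable.ennreal_ofReal
  calc ∫⁻ x in s, ENNReal.ofReal (∑ i ∈ t, w i * (f i).normed μ x) ∂μ
      = ∫⁻ x in s, ∑ i ∈ t, ENNReal.ofReal (w i) * ENNReal.ofReal ((f i).normed μ x) ∂μ := by
        congr with x
        rw [ENNReal.ofReal_sum_of_nonneg fun i _ => mul_nonneg (hw i) ((f i).nonneg_normed x)]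
        exact Finset.sum_congr rfl fun i _ => ENNReal.ofReal_mul (hw i)
    _ = ∑ i ∈ t, ENNReal.ofReal (w i) * ∫⁻ x in s, ENNReal.ofReal ((f i).normed μ x) ∂μ := by
        rw [lintegral_finsetSum _ fun i _ => (hmeas i).const_mul _]
        exact Finset.sum_congr rfl fun i _ => lintegral_const_mul _ (hmeas i)
    _ = ∑ i ∈ t, ENNReal.ofReal (w i) := by
        refine Finset.sum_congr rfl fun i hi => ?_
        rw [setLIntegral_normed_bump (f i) (hs i hi), mul_one]
    _ = ENNReal.ofReal (∑ i ∈ t, w i) := (ENNReal.ofReal_sum_of_nonneg fun i _ => hw i).symm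

lemma setLIntegral_sum_normed_bump_add_const {ι : Type*} [Fintype ι] {a : ι → E}
    (f : ∀ i, ContDiffBump (a i)) {w : ι → ℝ} (hw : ∀ i, 0 ≤ w i) {b : ℝ} (hb : 0 ≤ b)
    {K : Set E} (hK : ∀ i, ball (a i) (f i).rOut ⊆ K) :
    ∫⁻ x in K, ENNReal.ofReal (∑ i, w i * (f i).normed μ x + b) ∂μ =
      ENNReal.ofReal (∑ i, w i) + ENNReal.ofReal b * μ K := by
  have hnonneg (x : E) : 0 ≤ ∑ i, w i * (f i).normed μ x :=
    Finset.sum_nonneg fun i _ => mul_nonneg (hw i) ((f i).nonneg_normed x)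
  simp only [ENNReal.ofReal_add (hnonneg _) hb]
  rw [lintegral_add_right _ measurable_const, setLIntegral_sum_normed_bump f hw fun i _ => hK i,
    setLIntegral_const]

lemma exists_contDiff_withDensity_ge {ι : Type*} [Fintype ι] [Nonempty ι] {K : Set E}
    (hKb : IsBounded K) (hKm : MeasurableSet K) {a : ι → E} (hK : ∀ i, K ∈ 𝓝 (a i))
    {U : ι → Set E} (hU : ∀ i, U i ∈ 𝓝 (a i)) {w : ι → ℝ} (hw : ∀ i, 0 ≤ w i)
    (hsum : ∑ i, w i < 1) :
    ∃ ρ : E → ℝ, ContDiff ℝ (⊤ : ℕ∞) ρ ∧ (∀ x, 0 < ρ x) ∧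
      IsProbabilityMeasure ((μ.restrict K).withDensity fun x => ENNReal.ofReal (ρ x)) ∧
      ∀ t : Finset ι, ENNReal.ofReal (∑ i ∈ t, w i) ≤
        (μ.restrict K).withDensity (fun x => ENNReal.ofReal (ρ x)) (⋃ i ∈ t, U i) := by
  choose r hr hrKU using fun i => Metric.mem_nhds_iff.1 (inter_mem (hK i) (hU i))
  let f (i : ι) : ContDiffBump (a i) := ⟨r i / 2, r i, half_pos (hr i), half_lt_self (hr i)⟩
  have hfK (i : ι) : ball (a i) (f i).rOut ⊆ K := (hrKU i).trans inter_subset_left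
  have hKtop : μ K ≠ ∞ := hKb.measure_lt_top.ne
  have hVpos : 0 < μ.real K := ENNReal.toReal_pos
    (Measure.measure_pos_of_mem_nhds μ (hK (Classical.arbitrary ι))).ne' hKtop
  have hb : 0 < (1 - ∑ i, w i) / μ.real K :=
    div_pos (sub_pos.2 hsum) hVpos
  have hterm (i : ι) (x : E) : 0 ≤ w i * (f i).normed μ x :=
    mul_nonneg (hw i) ((f i).nonneg_normed x)
  refine ⟨fun x => ∑ i, w i * (f i).normed μ x + (1 - ∑ i, w i) / μ.real K, ?_, fun x =>
    add_pos_of_nonneg_of_pos (Finset.sum_nonneg fun i _ => hterm i x) hb, ⟨?_⟩, fun t => ?_⟩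
  · exact (ContDiff.sum fun i _ => contDiff_const.mul (f i).contDiff_normed).add contDiff_const
  · rw [withDensity_apply _ .univ, Measure.restrict_univ,
      setLIntegral_sum_normed_bump_add_const f hw hb.le hfK, ← ofReal_measureReal hKtop,
      ← ENNReal.ofReal_mul hb.le, ← ENNReal.ofReal_add (Finset.sum_nonneg fun i _ => hw i)
        (mul_nonneg hb.le measureReal_nonneg),
      div_mul_cancel₀ _ hVpos.ne', add_sub_cancel,
      ENNReal.ofReal_one]
  · have hfU : ∀ i ∈ t, ball (a i) (f i).rOut ⊆ (⋃ i ∈ t, U i) ∩ K := fun i hi =>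
      subset_inter (((hrKU i).trans inter_subset_right).trans
        (subset_biUnion_of_mem (u := U) hi)) (hfK i)
    rw [withDensity_apply', Measure.restrict_restrict' hKm,
      ← setLIntegral_sum_normed_bump (μ := μ) f hw hfU]
    refine lintegral_mono fun x => ENNReal.ofReal_le_ofReal ?_
    exact (Finset.sum_le_univ_sum_of_nonneg fun i => hterm i x).trans
      (le_add_of_nonneg_right hb.le)

lemma exists_contDiff_withDensity_closure_ge {S : Set E} (hSo : IsOpen S) (hSb : IsBounded S)
    {a b : E} (ha : a ∈ S) (hb : b ∈ S) {δ : ℝ} (hδ : 0 < δ) {u v : ℝ} (hu : 0 ≤ u) (hv : 0 ≤ v)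
    (huv : u + v < 1) :
    ∃ (ν : Measure E) (ρ : E → ℝ), ContDiff ℝ (⊤ : ℕ∞) ρ ∧ (∀ x, 0 < ρ x) ∧
      IsProbabilityMeasure ν ∧
      ν = (μ.restrict (closure S)).withDensity (fun x => ENNReal.ofReal (ρ x)) ∧
      ENNReal.ofReal u ≤ ν (ball a δ) ∧ ENNReal.ofReal v ≤ ν (ball b δ) ∧
      ENNReal.ofReal (u + v) ≤ ν (ball a δ ∪ ball b δ) := by
  have hnhds : ∀ i, closure S ∈ 𝓝 (![a, b] i) := Fin.forall_fin_two.2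
    ⟨mem_of_superset (hSo.mem_nhds ha) subset_closure,
      mem_of_superset (hSo.mem_nhds hb) subset_closure⟩
  obtain ⟨ρ, hρ, hpos, hν, hmass⟩ := exists_contDiff_withDensity_ge (μ := μ) hSb.closure
    measurableSet_closure hnhds (fun i => ball_mem_nhds _ hδ) (w := ![u, v])
    (Fin.forall_fin_two.2 ⟨hu, hv⟩) (by simpa [Fin.sum_univ_two] using huv)
  refine ⟨_, ρ, hρ, hpos, hν, rfl, ?_, ?_, ?_⟩
  · simpa using hmass {0}
  · simpa using hmass {1}
  · simpa using hmass {0, 1}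

end Measure

section Transport

lemma exists_mem_of_one_lt_measure_add_map {X Y : Type*} [MeasurableSpace X] [MeasurableSpace Y]
    {μ : Measure X} [IsProbabilityMeasure μ] {f : X → Y} (hf : Measurable f) {P : X → Prop}
    (hP : ∀ᵐ x ∂μ, P x) {A : Set X} {B : Set Y} (hB : MeasurableSet B)
    (hAB : 1 < μ A + μ.map f B) : ∃ x ∈ A, f x ∈ B ∧ P x := by
  by_contra! hcon
  have hinter : μ (A ∩ f ⁻¹' B) = 0 :=
    measure_mono_null (fun x hx => hcon x hx.1 hx.2) (ae_iff.1 hP)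
  have hunion := measure_union_add_inter (μ := μ) A (hf hB)
  rw [hinter, add_zero, ← Measure.map_apply hf hB] at hunion
  exact (hunion ▸ hAB).not_ge prob_le_one

lemma subset_closure_of_ae {X : Type*} [TopologicalSpace X] [MeasurableSpace X]
    [OpensMeasurableSpace X] {μ ν : Measure X} [μ.IsOpenPosMeasure] {Ω : Set X} (hΩ : IsOpen Ω)
    (hμν : μ.restrict Ω ≪ ν) {P : X → Prop} (hP : ∀ᵐ x ∂ν, P x) :
    Ω ⊆ closure {x ∈ Ω | P x} := by
  have hPΩ : ∀ᵐ x ∂μ, x ∈ Ω → P x := (ae_restrict_iff' hΩ.measurableSet).1 (hμν.ae_le hP)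
  refine fun x hx => mem_closure_iff.2 fun V hV hxV => ?_
  by_contra! hempty
  refine (hV.inter hΩ).measure_ne_zero μ ⟨x, hxV, hx⟩
    (measure_mono_null (fun z hz => ?_) (ae_iff.1 hPΩ))
  exact fun h => eq_empty_iff_forall_notMem.1 hempty z ⟨hz.1, hz.2, h hz.2⟩

lemma one_lt_add_of_ofReal_le {a b : ℝ≥0∞} {u v : ℝ} (hu : ENNReal.ofReal u ≤ a)
    (hv : ENNReal.ofReal v ≤ b) (huv : 1 < u + v) : 1 < a + b := calc
  1 < ENNReal.ofReal (u + v) := ENNReal.one_lt_ofReal.2 huv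
  _ ≤ ENNReal.ofReal u + ENNReal.ofReal v := ENNReal.ofReal_add_le
  _ ≤ a + b := add_le_add hu hv

variable {n : ℕ} {c : Euc n → Euc n → ℝ} {Ω Ω' : Set (Euc n)} {φ : Euc n → ℝ}
  {μ₀ μ₁ : Measure (Euc n)} {x₀ x₁ y₀ y₁ y₂ : Euc n}

lemma GradPush.exists_mem_contactSet [IsProbabilityMeasure μ₀] (h : GradPush c Ω Ω' φ μ₀ μ₁)
    {A B : Set (Euc n)} (hB : MeasurableSet B) (hAB : 1 < μ₀ A + μ₁ B) :
    ∃ x ∈ A, ∃ y ∈ B, y ∈ contactSet c Ω Ω' φ x := by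
  obtain ⟨f, hf, hcontact, rfl⟩ := h
  obtain ⟨x, hx, hfx, hxy⟩ := exists_mem_of_one_lt_measure_add_map hf hcontact hB hAB
  exact ⟨x, hx, f x, hfx, hxy⟩

lemma GradPush.ae_nonempty_contactSet (h : GradPush c Ω Ω' φ μ₀ μ₁) :
    ∀ᵐ x ∂μ₀, (contactSet c Ω Ω' φ x).Nonempty := by
  obtain ⟨f, -, hcontact, -⟩ := h
  exact hcontact.mono fun x hx => ⟨f x, hx⟩

lemma MaxPrincipleFails.exists_forall_not_gradPush (h : MaxPrincipleFails c x₀ x₁ y₀ y₁ y₂)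
    (hΩo : IsOpen Ω) (hΩb : IsBounded Ω) (hΩ'b : IsBounded Ω') (hc : CondA0 c Ω Ω')
    (hinj : InjOn (fun y => -gradx c x₀ y) (closure Ω')) (hx₀ : x₀ ∈ Ω) (hx₁ : x₁ ∈ Ω)
    (hy₀ : y₀ ∈ closure Ω') (hy₁ : y₁ ∈ closure Ω') (hy₂ : y₂ ∈ closure Ω') :
    ∃ δ > 0, ∀ (μ₀ μ₁ : Measure (Euc n)) [IsProbabilityMeasure μ₀], volume.restrict Ω ≪ μ₀ →
      1 < μ₀ (ball x₀ δ) + μ₁ (ball y₁ δ) → 1 < μ₀ (ball x₀ δ) + μ₁ (ball y₂ δ) →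
      1 < μ₀ (ball x₁ δ) + μ₁ (ball y₁ δ ∪ ball y₂ δ) →
      ¬ ∃ φ, CConvexOn c Ω Ω' φ ∧ ContDiffOn ℝ 1 φ Ω ∧ GradPush c Ω Ω' φ μ₀ μ₁ := by
  obtain ⟨δ, hδ, hincomp⟩ := h.exists_forall_not_supportedAt hΩo hΩ'b hc hinj hx₀ hx₁ hy₀ hy₁ hy₂
  refine ⟨δ, hδ, fun μ₀ μ₁ _ hμ₀ h₀₁ h₀₂ h₁ => ?_⟩
  rintro ⟨φ, hφc, hφ, hpush⟩
  have hsupp {x y : Euc n} (hy : y ∈ contactSet c Ω Ω' φ x) : SupportedAt c Ω φ x y :=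
    hφc.supportedAt hy (hc.isBounded_image_cost hΩb (subset_closure hy.1))
  have hdense : Ω ⊆ closure {x ∈ Ω | ∃ y ∈ closure Ω', SupportedAt c Ω φ x y} :=
    subset_closure_of_ae hΩo hμ₀ (hpush.ae_nonempty_contactSet.mono fun x ⟨y, hy⟩ =>
      ⟨y, subset_closure hy.1, hsupp hy⟩)
  have hmeet {A B : Set (Euc n)} (hB : MeasurableSet B) (hAB : 1 < μ₀ A + μ₁ B) :
      ∃ x ∈ A, ∃ y ∈ B, SupportedAt c Ω φ x y := by
    obtain ⟨x, hx, y, hy, hxy⟩ := hpush.exists_mem_contactSet hB hAB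
    exact ⟨x, hx, y, hy, hsupp hxy⟩
  exact hincomp φ hφ hdense (hmeet measurableSet_ball h₀₁) (hmeet measurableSet_ball h₀₂)
    (hmeet (measurableSet_ball.union measurableSet_ball) h₁)

end Transport

theorem stmt_3_general {n : ℕ} {Ω Ω' : Set (Euc n)} (hΩo : IsOpen Ω) (hΩb : IsBounded Ω)
    (hΩ'o : IsOpen Ω') (hΩ'b : IsBounded Ω') {c : Euc n → Euc n → ℝ} {T : Euc n → Euc n → Euc n}
    (hc : CondA0 c Ω Ω') {x₀ y₀ ξ ν : Euc n} (hx₀ : x₀ ∈ Ω) (hy₀ : y₀ ∈ Ω')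
    (hinj : InjOn (fun y => -gradx c x₀ y) (closure Ω'))
    (hdet : (fderiv ℝ (fun y => gradx c x₀ y) y₀ : Euc n →ₗ[ℝ] Euc n).det ≠ 0)
    (hT : ∀ y ∈ Ω', T x₀ (-gradx c x₀ y) = y) (horth : ⟪ξ, ν⟫ = 0)
    (hneg : costSecCurv c T x₀ y₀ ξ ν < 0) :
    ∃ (μ₀ μ₁ : Measure (Euc n)) (ρ₀ ρ₁ : Euc n → ℝ),
      IsProbabilityMeasure μ₀ ∧ IsProbabilityMeasure μ₁ ∧
      ContDiff ℝ (⊤ : ℕ∞) ρ₀ ∧ ContDiff ℝ (⊤ : ℕ∞) ρ₁ ∧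
      (∀ x ∈ closure Ω, 0 < ρ₀ x) ∧ (∀ y ∈ closure Ω', 0 < ρ₁ y) ∧
      μ₀ = (volume.restrict (closure Ω)).withDensity (fun x => ENNReal.ofReal (ρ₀ x)) ∧
      μ₁ = (volume.restrict (closure Ω')).withDensity (fun y => ENNReal.ofReal (ρ₁ y)) ∧
      ¬ ∃ φ : Euc n → ℝ, CConvexOn c Ω Ω' φ ∧ ContDiffOn ℝ 1 φ Ω ∧
          GradPush c Ω Ω' φ μ₀ μ₁ := by
  obtain ⟨x₁, hx₁, y₁, hy₁, y₂, hy₂, hfail⟩ := exists_maxPrincipleFails_of_costSecCurv_neg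
    (hΩo.mem_nhds hx₀) (hΩ'o.mem_nhds hy₀)
    (hc.contDiffAt (subset_closure hx₀) (subset_closure hy₀)) hdet
    (eventually_of_mem (hΩ'o.mem_nhds hy₀) hT) horth hneg
  obtain ⟨δ, hδ, hno⟩ := hfail.exists_forall_not_gradPush hΩo hΩb hΩ'b hc hinj hx₀ hx₁
    (subset_closure hy₀) (subset_closure hy₁) (subset_closure hy₂)
  -- The masses satisfy `3/4 + 9/20 > 1` and `1/5 + (9/20 + 9/20) > 1`.
  obtain ⟨μ₀, ρ₀, hρ₀, hρ₀pos, hprob₀, hμ₀, hx₀mass, hx₁mass, -⟩ :=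
    exists_contDiff_withDensity_closure_ge (μ := volume) hΩo hΩb hx₀ hx₁ hδ (u := 3 / 4)
      (v := 1 / 5) (by norm_num) (by norm_num) (by norm_num)
  obtain ⟨μ₁, ρ₁, hρ₁, hρ₁pos, hprob₁, hμ₁, hy₁mass, hy₂mass, hymass⟩ :=
    exists_contDiff_withDensity_closure_ge (μ := volume) hΩ'o hΩ'b hy₁ hy₂ hδ (u := 9 / 20)
      (v := 9 / 20) (by norm_num) (by norm_num) (by norm_num)
  have hac : volume.restrict Ω ≪ μ₀ := by
    rw [hμ₀]
    exact (Measure.restrict_mono_set volume subset_closure).absolutelyContinuous.trans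
      (withDensity_absolutelyContinuous' hρ₀.continuous.measurable.ennreal_ofReal.aemeasurable
        (ae_of_all _ fun x => (ENNReal.ofReal_pos.2 (hρ₀pos x)).ne'))
  exact ⟨μ₀, μ₁, ρ₀, ρ₁, hprob₀, hprob₁, hρ₀, hρ₁, fun x _ => hρ₀pos x, fun y _ => hρ₁pos y,
    hμ₀, hμ₁, hno μ₀ μ₁ hac (one_lt_add_of_ofReal_le hx₀mass hy₁mass (by norm_num))
      (one_lt_add_of_ofReal_le hx₀mass hy₂mass (by norm_num))
      (one_lt_add_of_ofReal_le hx₁mass hymass (by norm_num))⟩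

/-- if condition Aw is violated at some (x₀,y₀) ∈ Ω×Ω' (i.e. some
cost-sectional curvature is negative), then there exist probability measures with smooth
strictly positive densities on cl(Ω), cl(Ω') for which no C¹ c-convex potential solves the
optimal transportation problem. -/
theorem stmt_3 {n : ℕ} (Ω Ω' : Set (Euc n))
    (hΩo : IsOpen Ω) (hΩb : IsBounded Ω) (hΩ'o : IsOpen Ω') (hΩ'b : IsBounded Ω')
    (hΩsb : SmoothBoundary Ω) (hΩ'sb : SmoothBoundary Ω')
    (c : Euc n → Euc n → ℝ) (T : Euc n → Euc n → Euc n)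
    (hA0 : CondA0 c Ω Ω') (hA1 : CondA1 c Ω Ω') (hA2 : CondA2 c Ω Ω')
    (hT : IsCExp c Ω Ω' T)
    (hucc : UnifStrictCConvex c Ω Ω') (hucc' : UnifStrictCstarConvex c Ω Ω')
    (hviol : ∃ x₀ ∈ Ω, ∃ y₀ ∈ Ω', ∃ ξ ν : Euc n,
      ⟪ξ, ν⟫ = 0 ∧ costSecCurv c T x₀ y₀ ξ ν < 0) :
    ∃ (μ₀ μ₁ : Measure (Euc n)) (ρ₀ ρ₁ : Euc n → ℝ),
      IsProbabilityMeasure μ₀ ∧ IsProbabilityMeasure μ₁ ∧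
      ContDiff ℝ (⊤ : ℕ∞) ρ₀ ∧ ContDiff ℝ (⊤ : ℕ∞) ρ₁ ∧
      (∀ x ∈ closure Ω, 0 < ρ₀ x) ∧ (∀ y ∈ closure Ω', 0 < ρ₁ y) ∧
      μ₀ = (volume.restrict (closure Ω)).withDensity (fun x => ENNReal.ofReal (ρ₀ x)) ∧
      μ₁ = (volume.restrict (closure Ω')).withDensity (fun y => ENNReal.ofReal (ρ₁ y)) ∧
      ¬ ∃ φ : Euc n → ℝ, CConvexOn c Ω Ω' φ ∧ ContDiffOn ℝ 1 φ Ω ∧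
          GradPush c Ω Ω' φ μ₀ μ₁ := by
  obtain ⟨x₀, hx₀, y₀, hy₀, ξ, ν, horth, hneg⟩ := hviol
  exact stmt_3_general hΩo hΩb hΩ'o hΩ'b hA0 hx₀ hy₀ (hA1 x₀ (subset_closure hx₀)).1
    (hA2 x₀ (subset_closure hx₀) y₀ (subset_closure hy₀)) (hT x₀ hx₀) horth hneg
end

section
/- Let Ω, Ω' be connected bounded open subsets of ℝⁿ and let c satisfy condition A0. Let μ, ν be probability measures on Ω and Ω', and assume μ is absolutely continuous with respect to Lebesgue measure with density strictly positive Lebesgue-almost everywhere on Ω. Suppose π is a coupling of (μ,ν) (a probability measure on ℝⁿ×ℝⁿ with marginals μ and ν), φ̄ is c-convex on Ω, and π is concentrated on the contact graph {(x,y) ∈ Ω×Ω' : φ̄(x) + φ̄ᶜ(y) = −c(x,y)}. If φ is c-convex on Ω and ∫ (φ(x) + φᶜ(y) + c(x,y)) dπ(x,y) = 0, then φ − φ̄ is constant on Ω. Consequently, up to an additive constant, there is at most one c-convex maximizer φ (with ψ = φᶜ) of the dual Monge–Kantorovich problem sup{ −∫φ dμ − ∫ψ dν : φ(x)+ψ(y)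 ≥ −c(x,y) }. -/
open Set Filter Topology MeasureTheory Metric Bornology
open scoped RealInnerProductSpace ENNReal NNReal Topology

/-!
Vanishing of a nonnegative integral forces `π` onto the contact graph of `φ`, so `π`-almost every
`(x, y)` lies on the contact graphs of both `φ` and `φbar`. At such a pair `φ + c(·, y)` and
`φbar + c(·, y)` are both minimal at `x`, hence `∇φ(x) = -∇ₓc(x, y) = ∇φbar(x)` wherever both
potentials are differentiable. They are Lipschitz because the cost is, so by Rademacher's theorem
and the positivity of the density, `∇(φ - φbar)` vanishes Lebesgue-almost everywhere. A Lipschitz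
function with almost everywhere vanishing gradient on a connected open set is constant.
-/

section Lipschitz

theorem lipschitzOnWith_sSup_image {X ι : Type*} [PseudoMetricSpace X] {f : X → ι → ℝ}
    {s : Set X} {t : Set ι} {K : ℝ≥0} (hf : ∀ i ∈ t, LipschitzOnWith K (f · i) s) :
    LipschitzOnWith K (fun x ↦ sSup (f x '' t)) s := by
  obtain rfl | ht := t.eq_empty_or_nonempty
  · simpa only [image_empty] using (LipschitzWith.const' _).lipschitzOnWith
  have le_add : ∀ x ∈ s, ∀ y ∈ s, ∀ i ∈ t, f x i ≤ f y i + K * dist x y := fun x hx y hy i hi ↦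
    LipschitzOnWith.le_add_mul (hf i hi) hx hy
  refine LipschitzOnWith.of_le_add_mul _ fun x hx y hy ↦ ?_
  by_cases hbdd : BddAbove (f y '' t)
  · refine csSup_le (ht.image _) (forall_mem_image.2 fun i hi ↦ ?_)
    grw [le_add x hx y hy i hi, le_csSup hbdd (mem_image_of_mem _ hi)]
  -- Both suprema are infinite, so both carry the junk value `0`.
  · have hbdd' : ¬BddAbove (f x '' t) := by
      rintro ⟨B, hB⟩
      refine hbdd ⟨B + K * dist y x, forall_mem_image.2 fun i hi ↦ ?_⟩
      grw [le_add y hy x hx i hi, hB (mem_image_of_mem _ hi)]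
    rw [Real.sSup_of_not_bddAbove hbdd, Real.sSup_of_not_bddAbove hbdd', zero_add]
    positivity

theorem isBounded_image_of_lipschitzOnWith {X Y : Type*} [PseudoMetricSpace X]
    [PseudoMetricSpace Y] {f : X → Y} {s : Set X} {K : ℝ≥0} (hf : LipschitzOnWith K f s)
    (hs : IsBounded s) : IsBounded (f '' s) := by
  obtain ⟨B, hB⟩ := Metric.isBounded_iff.1 hs
  refine Metric.isBounded_iff.2
    ⟨K * B, forall_mem_image.2 fun x hx ↦ forall_mem_image.2 fun y hy ↦ ?_⟩
  grw [hf.dist_le_mul x hx y hy, hB hx hy]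

theorem integrable_of_lipschitzOnWith {X : Type*} [PseudoMetricSpace X] [MeasurableSpace X]
    [OpensMeasurableSpace X] {μ : Measure X} [IsFiniteMeasure μ] {f : X → ℝ} {s : Set X} {K : ℝ≥0}
    (hf : LipschitzOnWith K f s) (hs : IsBounded s) (hμ : ∀ᵐ x ∂μ, x ∈ s) : Integrable f μ := by
  obtain ⟨R, hR⟩ := (isBounded_image_of_lipschitzOnWith hf hs).exists_norm_le
  obtain ⟨g, hg, hfg⟩ := hf.extend_real
  have hmeas : AEStronglyMeasurable f μ :=
    hg.continuous.aestronglyMeasurable.congr (hμ.mono fun x hx ↦ (hfg hx).symm)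
  exact .of_bound hmeas R (hμ.mono fun x hx ↦ hR _ (mem_image_of_mem f hx))

theorem lipschitzOnWith_left_of_prod {X Y Z : Type*} [PseudoMetricSpace X] [PseudoMetricSpace Y]
    [PseudoMetricSpace Z] {f : X → Y → Z} {s : Set X} {t : Set Y} {K : ℝ≥0}
    (hf : LipschitzOnWith K (fun q : X × Y ↦ f q.1 q.2) (s ×ˢ t)) {y : Y} (hy : y ∈ t) :
    LipschitzOnWith K (f · y) s :=
  .of_dist_le_mul fun x hx x' hx' ↦ by
    simpa only [dist_prod_same_right] using hf.dist_le_mul (x, y) ⟨hx, hy⟩ (x', y) ⟨hx', hy⟩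

theorem lipschitzOnWith_right_of_prod {X Y Z : Type*} [PseudoMetricSpace X] [PseudoMetricSpace Y]
    [PseudoMetricSpace Z] {f : X → Y → Z} {s : Set X} {t : Set Y} {K : ℝ≥0}
    (hf : LipschitzOnWith K (fun q : X × Y ↦ f q.1 q.2) (s ×ˢ t)) {x : X} (hx : x ∈ s) :
    LipschitzOnWith K (f x) t :=
  .of_dist_le_mul fun y hy y' hy' ↦ by
    simpa only [dist_prod_same_left] using hf.dist_le_mul (x, y) ⟨hx, hy⟩ (x, y') ⟨hx, hy'⟩

theorem exists_lipschitzOnWith_of_contDiffOn {E F : Type*} [NormedAddCommGroup E]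
    [NormedSpace ℝ E] [NormedAddCommGroup F] [NormedSpace ℝ F] {f : E → F} {s U : Set E}
    (hs : IsCompact s) (hU : IsOpen U) (hsU : s ⊆ U) (hf : ContDiffOn ℝ 1 f U) :
    ∃ K, LipschitzOnWith K f s := by
  refine LocallyLipschitzOn.exists_lipschitzOnWith_of_compact hs fun x hx ↦ ?_
  obtain ⟨K, t, ht, hK⟩ := (hf.contDiffAt (hU.mem_nhds (hsU hx))).exists_lipschitzOnWith
  exact ⟨K, t, mem_nhdsWithin_of_mem_nhds ht, hK⟩

theorem ae_differentiableAt_of_lipschitzOnWith {E F : Type*} [NormedAddCommGroup E]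
    [NormedSpace ℝ E] [FiniteDimensional ℝ E] [MeasurableSpace E] [BorelSpace E]
    [NormedAddCommGroup F] [NormedSpace ℝ F] [FiniteDimensional ℝ F] {μ : Measure E}
    [μ.IsAddHaarMeasure] {f : E → F} {s : Set E} {K : ℝ≥0} (hs : IsOpen s)
    (hf : LipschitzOnWith K f s) : ∀ᵐ x ∂μ.restrict s, DifferentiableAt ℝ f x := by
  rw [ae_restrict_iff' hs.measurableSet]
  filter_upwards [hf.ae_differentiableWithinAt_of_mem (μ := μ)] with x hx hxs
  exact (hx hxs).differentiableAt (hs.mem_nhds hxs)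

end Lipschitz

section ConstantOfDerivativeZero

variable {E F : Type*} [NormedAddCommGroup E] [NormedSpace ℝ E] [NormedAddCommGroup F]
  [NormedSpace ℝ F] {f : E → F} {s : Set E} {K : ℝ≥0}

theorem eq_of_ae_hasFDerivAt_zero_segment (hs : Convex ℝ s) (hf : LipschitzOnWith K f s) {x v : E}
    (hx : x ∈ s) (hxv : x + v ∈ s)
    (hderiv : ∀ᵐ t : ℝ, x + t • v ∈ s → HasFDerivAt f (0 : E →L[ℝ] F) (x + t • v)) :
    f (x + v) = f x := by
  have mapsTo : MapsTo (fun t : ℝ ↦ x + t • v) (uIcc 0 1) s := fun t ht ↦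
    hs.add_smul_mem hx hxv (uIcc_of_le (zero_le_one' ℝ) ▸ ht)
  have hline (t : ℝ) : HasDerivAt (fun t : ℝ ↦ x + t • v) v t := by
    simpa using ((hasDerivAt_id t).smul_const v).const_add x
  have lipschitz : LipschitzOnWith (K * ‖v‖₊) (fun t : ℝ ↦ f (x + t • v)) (uIcc 0 1) := by
    refine hf.comp (LipschitzWith.lipschitzOnWith (.of_dist_le_mul fun a b ↦ ?_)) mapsTo
    rw [dist_add_left, dist_eq_norm, ← sub_smul, norm_smul, mul_comm, coe_nnnorm, dist_eq_norm]
  obtain ⟨a, ha⟩ := lipschitz.absolutelyContinuousOnInterval.const_of_ae_hasDerivAt_zero <| by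
    filter_upwards [hderiv] with t ht htI
    exact (ht (mapsTo htI)).comp_hasDerivAt t (hline t)
  calc f (x + v) = f (x + (1 : ℝ) • v) := by rw [one_smul]
    _ = f (x + (0 : ℝ) • v) := by rw [ha 1 right_mem_uIcc, ha 0 left_mem_uIcc]
    _ = f x := by rw [zero_smul, add_zero]

variable [MeasurableSpace E] [BorelSpace E] [CompleteSpace F]

theorem measurableSet_hasFDerivAt_zero (f : E → F) :
    MeasurableSet {x | HasFDerivAt f (0 : E →L[ℝ] F) x} := by
  have : {x | HasFDerivAt f (0 : E →L[ℝ] F) x} =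
      {x | DifferentiableAt ℝ f x} ∩ fderiv ℝ f ⁻¹' {0} :=
    ext fun x ↦ ⟨fun h ↦ ⟨h.differentiableAt, h.fderiv⟩, fun h ↦ h.2 ▸ h.1.hasFDerivAt⟩
  rw [this]
  exact (measurableSet_of_differentiableAt ℝ f).inter
    (measurable_fderiv ℝ f (measurableSet_singleton 0))

variable [FiniteDimensional ℝ E] {μ : Measure E} [μ.IsAddHaarMeasure]

-- By Fubini, almost every segment parallel to `v` meets the exceptional set in a null set.
theorem ae_eq_add_of_ae_hasFDerivAt_zero (hs : Convex ℝ s) (hsm : MeasurableSet s)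
    (hf : LipschitzOnWith K f s) (hderiv : ∀ᵐ x ∂μ, x ∈ s → HasFDerivAt f (0 : E →L[ℝ] F) x)
    (v : E) : ∀ᵐ x ∂μ, x ∈ s → x + v ∈ s → f (x + v) = f x := by
  have hmeas : MeasurableSet {x | x ∈ s → HasFDerivAt f (0 : E →L[ℝ] F) x} :=
    hsm.imp (measurableSet_hasFDerivAt_zero f)
  filter_upwards [(ae_ae_add_linearMap_mem_iff (LinearMap.toSpanSingleton ℝ E v) volume μ
    hmeas).2 hderiv] with x hline hx hxv
  exact eq_of_ae_hasFDerivAt_zero_segment hs hf hx hxv (by simpa using hline)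

theorem eq_of_ae_hasFDerivAt_zero_of_convex (hs : Convex ℝ s) (hso : IsOpen s)
    (hf : LipschitzOnWith K f s) (hderiv : ∀ᵐ x ∂μ, x ∈ s → HasFDerivAt f (0 : E →L[ℝ] F) x)
    {x y : E} (hx : x ∈ s) (hy : y ∈ s) : f y = f x := by
  have hcont : Continuous fun z ↦ z + (y - x) := continuous_add_const _
  have hopen : IsOpen (s ∩ (fun z ↦ z + (y - x)) ⁻¹' s) := hso.inter (hso.preimage hcont)
  have hae : (fun z ↦ f (z + (y - x))) =ᵐ[μ.restrict (s ∩ (fun z ↦ z + (y - x)) ⁻¹' s)] f := by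
    rw [EventuallyEq, ae_restrict_iff' hopen.measurableSet]
    filter_upwards [ae_eq_add_of_ae_hasFDerivAt_zero hs hso.measurableSet hf hderiv (y - x)]
      with z hz hmem using hz hmem.1 hmem.2
  have heq : EqOn (fun z ↦ f (z + (y - x))) f (s ∩ (fun z ↦ z + (y - x)) ⁻¹' s) :=
    Measure.eqOn_open_of_ae_eq hae hopen
      (hf.continuousOn.comp hcont.continuousOn inter_subset_right)
      (hf.continuousOn.mono inter_subset_left)
  simpa using heq (x := x) ⟨hx, by simpa using hy⟩

theorem exists_eq_const_of_ae_hasFDerivAt_zero (hso : IsOpen s) (hs : IsPreconnected s)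
    (hf : LocallyLipschitzOn s f)
    (hderiv : ∀ᵐ x ∂μ.restrict s, HasFDerivAt f (0 : E →L[ℝ] F) x) :
    ∃ a, ∀ x ∈ s, f x = a := by
  rw [ae_restrict_iff' hso.measurableSet] at hderiv
  have hzero : ∀ x ∈ s, HasFDerivAt f (0 : E →L[ℝ] F) x := by
    intro x hx
    obtain ⟨K, t, ht, hK⟩ := hf hx
    rw [hso.nhdsWithin_eq hx] at ht
    obtain ⟨r, hr, hball⟩ := Metric.mem_nhds_iff.1 (inter_mem ht (hso.mem_nhds hx))
    refine (hasFDerivAt_const (f x) x).congr_of_eventuallyEq ?_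
    filter_upwards [ball_mem_nhds x hr] with y hy
    exact eq_of_ae_hasFDerivAt_zero_of_convex (convex_ball x r) isOpen_ball
      (hK.mono fun z hz ↦ (hball hz).1) (hderiv.mono fun z hz hzr ↦ hz (hball hzr).2)
      (mem_ball_self hr) hy
  exact hso.exists_is_const_of_fderiv_eq_zero (𝕜 := ℝ) hs
    (fun x hx ↦ (hzero x hx).differentiableAt.differentiableWithinAt) fun x hx ↦ (hzero x hx).fderiv

end ConstantOfDerivativeZero

theorem restrict_absolutelyContinuous_of_rnDeriv_pos {X : Type*} [MeasurableSpace X]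
    {μ ν : Measure X} {s : Set X} (hs : MeasurableSet s)
    (hpos : ∀ᵐ x ∂ν.restrict s, 0 < μ.rnDeriv ν x) : ν.restrict s ≪ μ := by
  have hle : (ν.restrict s).withDensity (μ.rnDeriv ν) ≤ μ := by
    rw [← restrict_withDensity hs]
    exact Measure.restrict_le_self.trans (Measure.withDensity_rnDeriv_le μ ν)
  exact (withDensity_absolutelyContinuous' (Measure.measurable_rnDeriv μ ν).aemeasurable
    (hpos.mono fun x hx ↦ hx.ne')).trans hle.absolutelyContinuous

section Cost

variable {n : ℕ} {c : Euc n → Euc n → ℝ} {Ω Ω' : Set (Euc n)} {φ φbar : Euc n → ℝ}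
  {C K K' : ℝ≥0}

theorem CondA0.exists_lipschitzOnWith (hc : CondA0 c Ω Ω') (hΩ : IsBounded Ω)
    (hΩ' : IsBounded Ω') :
    ∃ C, LipschitzOnWith C (fun q : Euc n × Euc n ↦ c q.1 q.2) (Ω ×ˢ Ω') := by
  obtain ⟨U, hU, hsub, hcU⟩ := hc
  obtain ⟨C, hC⟩ := exists_lipschitzOnWith_of_contDiffOn
    (hΩ.isCompact_closure.prod hΩ'.isCompact_closure) hU hsub (hcU.of_le (by norm_num))
  exact ⟨C, hC.mono (prod_mono subset_closure subset_closure)⟩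

theorem CondA0.differentiableOn_left (hc : CondA0 c Ω Ω') {y : Euc n} (hy : y ∈ Ω') :
    DifferentiableOn ℝ (c · y) Ω := by
  obtain ⟨U, -, hsub, hcU⟩ := hc
  have hcU' : DifferentiableOn ℝ (fun q : Euc n × Euc n ↦ c q.1 q.2) U :=
    hcU.differentiableOn (by norm_num)
  exact hcU'.comp (f := fun x ↦ (x, y)) (by fun_prop)
    fun x hx ↦ hsub ⟨subset_closure hx, subset_closure hy⟩

theorem CConvexOn.lipschitzOnWith (hφ : CConvexOn c Ω Ω' φ)
    (hc : ∀ y ∈ Ω', LipschitzOnWith C (c · y) Ω) : LipschitzOnWith C φ Ω := by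
  obtain ⟨ψ, -, hψ⟩ := hφ
  have hlip : LipschitzOnWith C (cstarTransform c Ω' ψ) Ω :=
    lipschitzOnWith_sSup_image fun y hy ↦ by
      simpa using (hc y hy).neg.sub (LipschitzWith.const (ψ y)).lipschitzOnWith
  intro x hx x' hx'
  rw [hψ x hx, hψ x' hx']
  exact hlip hx hx'

theorem lipschitzOnWith_ctransform (hc : ∀ x ∈ Ω, LipschitzOnWith C (c x) Ω') :
    LipschitzOnWith C (ctransform c Ω φ) Ω' :=
  lipschitzOnWith_sSup_image fun x hx ↦ by
    simpa using (hc x hx).neg.sub (LipschitzWith.const (φ x)).lipschitzOnWith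

/-- The duality gap `φ(x) + φᶜ(y) + c(x, y)` at `q = (x, y)`: nonnegative by the definition of the
c-transform when that supremum is finite, and zero exactly on the contact graph of `φ`. -/
noncomputable def dualityGap (c : Euc n → Euc n → ℝ) (Ω : Set (Euc n)) (φ : Euc n → ℝ)
    (q : Euc n × Euc n) : ℝ :=
  φ q.1 + ctransform c Ω φ q.2 + c q.1 q.2

theorem dualityGap_nonneg (hΩ : IsBounded Ω) (hφ : LipschitzOnWith K φ Ω) {x y : Euc n}
    (hc : LipschitzOnWith C (c · y) Ω) (hx : x ∈ Ω) : 0 ≤ dualityGap c Ω φ (x, y) := by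
  have hbdd : BddAbove ((fun x ↦ -c x y - φ x) '' Ω) :=
    (isBounded_image_of_lipschitzOnWith (hc.neg.sub hφ) hΩ).bddAbove
  have hle : -c x y - φ x ≤ ctransform c Ω φ y := le_csSup hbdd ⟨x, hx, rfl⟩
  unfold dualityGap
  linarith

theorem mem_contactSet_iff_dualityGap_eq_zero {x y : Euc n} :
    y ∈ contactSet c Ω Ω' φ x ↔ y ∈ Ω' ∧ dualityGap c Ω φ (x, y) = 0 :=
  and_congr_right' eq_neg_iff_add_eq_zero

theorem lipschitzOnWith_dualityGap
    (hc : LipschitzOnWith C (fun q : Euc n × Euc n ↦ c q.1 q.2) (Ω ×ˢ Ω'))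
    (hφ : LipschitzOnWith K φ Ω) :
    LipschitzOnWith (K + C + C) (dualityGap c Ω φ) (Ω ×ˢ Ω') := by
  have hφc : LipschitzOnWith C (ctransform c Ω φ) Ω' :=
    lipschitzOnWith_ctransform fun x ↦ lipschitzOnWith_right_of_prod hc
  have hfst := hφ.comp LipschitzWith.prod_fst.lipschitzOnWith (mapsTo_fst_prod (t := Ω'))
  have hsnd := hφc.comp LipschitzWith.prod_snd.lipschitzOnWith (mapsTo_snd_prod (s := Ω))
  rw [mul_one] at hfst hsnd
  exact (hfst.add hsnd).add hc

theorem ae_mem_contactSet_of_integral_dualityGap_eq_zero {π : Measure (Euc n × Euc n)}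
    [IsFiniteMeasure π] (hΩ : IsBounded Ω) (hΩ' : IsBounded Ω')
    (hc : LipschitzOnWith C (fun q : Euc n × Euc n ↦ c q.1 q.2) (Ω ×ˢ Ω'))
    (hφ : LipschitzOnWith K φ Ω) (hπ : ∀ᵐ q ∂π, q ∈ Ω ×ˢ Ω')
    (hint : ∫ q, dualityGap c Ω φ q ∂π = 0) :
    ∀ᵐ q ∂π, q.2 ∈ contactSet c Ω Ω' φ q.1 := by
  have hgap : Integrable (dualityGap c Ω φ) π :=
    integrable_of_lipschitzOnWith (lipschitzOnWith_dualityGap hc hφ) (hΩ.prod hΩ') hπ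
  have hnonneg : 0 ≤ᵐ[π] dualityGap c Ω φ := hπ.mono fun q hq ↦
    dualityGap_nonneg hΩ hφ (lipschitzOnWith_left_of_prod hc hq.2) hq.1
  filter_upwards [hπ, (integral_eq_zero_iff_of_nonneg_ae hnonneg hgap).1 hint] with q hq hzero
  exact mem_contactSet_iff_dualityGap_eq_zero.2 ⟨hq.2, hzero⟩

theorem fderiv_eq_neg_of_mem_contactSet (hΩo : IsOpen Ω) (hΩ : IsBounded Ω)
    (hφ : LipschitzOnWith K φ Ω) {x y : Euc n} (hc : LipschitzOnWith C (c · y) Ω) (hx : x ∈ Ω)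
    (hy : y ∈ contactSet c Ω Ω' φ x) (hφx : DifferentiableAt ℝ φ x)
    (hcx : DifferentiableAt ℝ (c · y) x) : fderiv ℝ φ x = -fderiv ℝ (c · y) x := by
  have hmin : IsLocalMin (fun x' ↦ φ x' + c x' y) x := by
    filter_upwards [hΩo.mem_nhds hx] with x' hx'
    have hgap := dualityGap_nonneg hΩ hφ hc hx'
    have hzero := (mem_contactSet_iff_dualityGap_eq_zero.1 hy).2
    unfold dualityGap at hgap hzero
    linarith
  exact eq_neg_of_add_eq_zero_left (fderiv_fun_add hφx hcx ▸ hmin.fderiv_eq_zero)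

theorem hasFDerivAt_sub_zero_of_mem_contactSet (hΩo : IsOpen Ω) (hΩ : IsBounded Ω)
    (hφ : LipschitzOnWith K φ Ω) (hφbar : LipschitzOnWith K' φbar Ω) {x y : Euc n}
    (hc : LipschitzOnWith C (c · y) Ω) (hx : x ∈ Ω) (hy : y ∈ contactSet c Ω Ω' φ x)
    (hybar : y ∈ contactSet c Ω Ω' φbar x) (hcx : DifferentiableAt ℝ (c · y) x)
    (hφx : DifferentiableAt ℝ φ x) (hφbarx : DifferentiableAt ℝ φbar x) :
    HasFDerivAt (φ - φbar) (0 : Euc n →L[ℝ] ℝ) x := by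
  have heq : fderiv ℝ φ x = fderiv ℝ φbar x :=
    (fderiv_eq_neg_of_mem_contactSet hΩo hΩ hφ hc hx hy hφx hcx).trans
      (fderiv_eq_neg_of_mem_contactSet hΩo hΩ hφbar hc hx hybar hφbarx hcx).symm
  simpa only [heq, sub_self] using hφx.hasFDerivAt.sub hφbarx.hasFDerivAt

theorem ae_hasFDerivAt_sub_zero_of_ae_mem_contactSet {π : Measure (Euc n × Euc n)}
    (hΩo : IsOpen Ω) (hΩ : IsBounded Ω)
    (hcLip : ∀ y ∈ Ω', LipschitzOnWith C (c · y) Ω)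
    (hcDiff : ∀ y ∈ Ω', DifferentiableOn ℝ (c · y) Ω)
    (hφ : LipschitzOnWith K φ Ω) (hφbar : LipschitzOnWith K' φbar Ω)
    (hvol : volume.restrict Ω ≪ π.map Prod.fst)
    (hcontact : ∀ᵐ q ∂π, q.2 ∈ contactSet c Ω Ω' φ q.1)
    (hcontactBar : ∀ᵐ q ∂π, q.1 ∈ Ω ∧ q.2 ∈ contactSet c Ω Ω' φbar q.1) :
    ∀ᵐ x ∂volume.restrict Ω, HasFDerivAt (φ - φbar) (0 : Euc n →L[ℝ] ℝ) x := by
  have hmeas : MeasurableSet {x | DifferentiableAt ℝ φ x → DifferentiableAt ℝ φbar x →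
      HasFDerivAt (φ - φbar) (0 : Euc n →L[ℝ] ℝ) x} :=
    (measurableSet_of_differentiableAt ℝ φ).imp
      ((measurableSet_of_differentiableAt ℝ φbar).imp (measurableSet_hasFDerivAt_zero _))
  have hmarginal : ∀ᵐ x ∂π.map Prod.fst, DifferentiableAt ℝ φ x → DifferentiableAt ℝ φbar x →
      HasFDerivAt (φ - φbar) (0 : Euc n →L[ℝ] ℝ) x := by
    rw [ae_map_iff measurable_fst.aemeasurable hmeas]
    filter_upwards [hcontact, hcontactBar] with q hq hqbar
    have hcx : DifferentiableAt ℝ (c · q.2) q.1 :=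
      (hcDiff q.2 hq.1).differentiableAt (hΩo.mem_nhds hqbar.1)
    exact hasFDerivAt_sub_zero_of_mem_contactSet hΩo hΩ hφ hφbar (hcLip q.2 hq.1) hqbar.1 hq
      hqbar.2 hcx
  filter_upwards [hvol.ae_le hmarginal, ae_differentiableAt_of_lipschitzOnWith hΩo hφ,
    ae_differentiableAt_of_lipschitzOnWith hΩo hφbar] with x hx hφx hφbarx using hx hφx hφbarx

theorem stmt_7_general (hΩo : IsOpen Ω) (hΩ : IsBounded Ω) (hΩc : IsPreconnected Ω)
    (hΩ' : IsBounded Ω')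
    (hcLip : LipschitzOnWith C (fun q : Euc n × Euc n ↦ c q.1 q.2) (Ω ×ˢ Ω'))
    (hcDiff : ∀ y ∈ Ω', DifferentiableOn ℝ (c · y) Ω)
    {π : Measure (Euc n × Euc n)} [IsFiniteMeasure π]
    (hvol : volume.restrict Ω ≪ π.map Prod.fst)
    (hφbar : CConvexOn c Ω Ω' φbar)
    (hcontactBar : ∀ᵐ q ∂π, q.1 ∈ Ω ∧ q.2 ∈ contactSet c Ω Ω' φbar q.1)
    (hφ : CConvexOn c Ω Ω' φ) (hint : ∫ q, dualityGap c Ω φ q ∂π = 0) :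
    ∃ k : ℝ, ∀ x ∈ Ω, φ x - φbar x = k := by
  have hcLeft : ∀ y ∈ Ω', LipschitzOnWith C (c · y) Ω := fun y ↦ lipschitzOnWith_left_of_prod hcLip
  have hφLip : LipschitzOnWith C φ Ω := hφ.lipschitzOnWith hcLeft
  have hφbarLip : LipschitzOnWith C φbar Ω := hφbar.lipschitzOnWith hcLeft
  have hcontact : ∀ᵐ q ∂π, q.2 ∈ contactSet c Ω Ω' φ q.1 :=
    ae_mem_contactSet_of_integral_dualityGap_eq_zero hΩ hΩ' hcLip hφLip
      (hcontactBar.mono fun q hq ↦ ⟨hq.1, hq.2.1⟩) hint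
  have hdiffLip : LocallyLipschitzOn Ω (φ - φbar) := fun _ _ ↦
    ⟨C + C, Ω, self_mem_nhdsWithin, hφLip.sub hφbarLip⟩
  exact exists_eq_const_of_ae_hasFDerivAt_zero hΩo hΩc hdiffLip
    (ae_hasFDerivAt_sub_zero_of_ae_mem_contactSet hΩo hΩ hcLeft hcDiff hφLip hφbarLip hvol
      hcontact hcontactBar)

end Cost

/-- uniqueness of the c-convex potential. If μ has strictly positive density
a.e. on the connected domain Ω, π is an optimal coupling concentrated on the contact graph
of a c-convex φ̄, and φ is c-convex with ∫(φ(x)+φᶜ(y)+c(x,y)) dπ = 0, then φ − φ̄ is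
constant on Ω. -/
theorem stmt_7 {n : ℕ} (Ω Ω' : Set (Euc n))
    (hΩo : IsOpen Ω) (hΩb : IsBounded Ω) (hΩc : IsConnected Ω)
    (hΩ'o : IsOpen Ω') (hΩ'b : IsBounded Ω') (hΩ'c : IsConnected Ω')
    (c : Euc n → Euc n → ℝ) (hA0 : CondA0 c Ω Ω')
    (μ ν : Measure (Euc n))
    (hμ : IsProbabilityMeasure μ) (hν : IsProbabilityMeasure ν)
    (hμΩ : μ Ωᶜ = 0) (hνΩ' : ν Ω'ᶜ = 0)
    (hac : μ ≪ volume)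
    (hpos : ∀ᵐ x ∂volume.restrict Ω, 0 < μ.rnDeriv volume x)
    (π : Measure (Euc n × Euc n)) (hπ : IsProbabilityMeasure π)
    (hπ1 : π.map Prod.fst = μ) (hπ2 : π.map Prod.snd = ν)
    (φbar : Euc n → ℝ) (hφbar : CConvexOn c Ω Ω' φbar)
    (hconc : π {q : Euc n × Euc n |
      ¬(q.1 ∈ Ω ∧ q.2 ∈ Ω' ∧ φbar q.1 + ctransform c Ω φbar q.2 = -c q.1 q.2)} = 0)
    (φ : Euc n → ℝ) (hφ : CConvexOn c Ω Ω' φ)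
    (hint : ∫ q : Euc n × Euc n, (φ q.1 + ctransform c Ω φ q.2 + c q.1 q.2) ∂π = 0) :
    ∃ k : ℝ, ∀ x ∈ Ω, φ x - φbar x = k := by
  obtain ⟨C, hcLip⟩ := hA0.exists_lipschitzOnWith hΩb hΩ'b
  exact stmt_7_general hΩo hΩb hΩc.isPreconnected hΩ'b hcLip (fun _ ↦ hA0.differentiableOn_left)
    (hπ1 ▸ restrict_absolutelyContinuous_of_rnDeriv_pos hΩo.measurableSet hpos) hφbar hconc hφ hint
end

section
/- For every n ≥ 1 there exist a probability measure μ₀ on ℝⁿ, a real number p > n, and a constant C > 0 such that μ₀(B_ε(x)) ≤ C ε^{n(1−1/p)} for all ε > 0 and all x ∈ ℝⁿ, and yet μ₀ is not absolutely continuous with respect to Lebesgue measure. (For instance, one may take μ₀ proportional to the product of (n−1)-dimensional Lebesgue measure on [0,1]^{n−1} with the Cantor–Lebesgue measure, the Stieltjes measure of the Devil's staircase, on [0,1].) -/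
open Set Filter Topology MeasureTheory Metric Bornology
open scoped RealInnerProductSpace ENNReal NNReal Topology

/-!
The Cantor–Lebesgue measure is the law of `∑ 2 ωₖ 3⁻⁽ᵏ⁺¹⁾` for independent fair coin flips `ωₖ`.
Points of the Cantor set closer than `3⁻ⁿ` share their first `n` ternary digits, so a ball of
radius comparable to `3⁻ⁿ` has mass at most comparable to `2⁻ⁿ = (3⁻ⁿ) ^ α`, where
`α = log 2 / log 3`. Its product with `n - 1` copies of the uniform measure on `[0, 1]` is
singular, because the Cantor set is null, while the mass of its balls is
`O(ε ^ (n - 1 + α))`. The exponent is `n (1 - 1 / p)` for `p = n / (1 - α) > n`.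
-/

section UpperRegular

variable {X Y : Type*} [PseudoMetricSpace X] [MeasurableSpace X]
  [PseudoMetricSpace Y] [MeasurableSpace Y]

/-- A measure is upper regular of exponent `s` if balls of radius `ε` have mass `O(ε ^ s)`,
uniformly in their centre and for all radii `ε > 0`, not just small ones. This is the growth
condition of Frostman's lemma. Condition (Lp) on `ℝⁿ` is the case `s = n (1 - 1 / p)`. -/
def UpperRegular (μ : Measure X) (s : ℝ) : Prop :=
  ∃ C > 0, ∀ ε > 0, ∀ x, μ (ball x ε) ≤ ENNReal.ofReal (C * ε ^ s)

namespace UpperRegular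

lemma mono {μ ν : Measure X} {s : ℝ} (hν : UpperRegular ν s) (hμν : μ ≤ ν) :
    UpperRegular μ s := by
  obtain ⟨C, hC, hball⟩ := hν
  exact ⟨C, hC, fun ε hε x => (hμν _).trans (hball ε hε x)⟩

lemma map_measurableEquiv {μ : Measure X} {s : ℝ} (hμ : UpperRegular μ s) (e : X ≃ᵐ Y)
    (he : LipschitzWith 1 e.symm) : UpperRegular (μ.map e) s := by
  obtain ⟨C, hC, hball⟩ := hμ
  refine ⟨C, hC, fun ε hε y => ?_⟩
  have hsub : e ⁻¹' ball y ε ⊆ ball (e.symm y) ε := fun x hx => by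
    simpa using (he.dist_le_mul (e x) y).trans_lt (by simpa using hx)
  rw [e.map_apply]
  exact (measure_mono hsub).trans (hball ε hε _)

lemma pi {ι : Type*} [Fintype ι] {Z : ι → Type*} [∀ i, PseudoMetricSpace (Z i)]
    [∀ i, MeasurableSpace (Z i)] {μ : ∀ i, Measure (Z i)} [∀ i, SigmaFinite (μ i)] {s : ι → ℝ}
    (hμ : ∀ i, UpperRegular (μ i) (s i)) : UpperRegular (Measure.pi μ) (∑ i, s i) := by
  choose C hC hball using hμ
  refine ⟨∏ i, C i, Finset.prod_pos fun i _ => hC i, fun ε hε x => ?_⟩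
  calc Measure.pi μ (ball x ε)
      = ∏ i, μ i (ball (x i) ε) := by rw [ball_pi x hε, Measure.pi_pi]
    _ ≤ ∏ i, ENNReal.ofReal (C i * ε ^ s i) := Finset.prod_le_prod' fun i _ => hball i ε hε _
    _ = ENNReal.ofReal (∏ i, C i * ε ^ s i) :=
        (ENNReal.ofReal_prod_of_nonneg fun i _ => by have := hC i; positivity).symm
    _ = ENNReal.ofReal ((∏ i, C i) * ε ^ ∑ i, s i) := by
        rw [Finset.prod_mul_distrib, Real.rpow_sum_of_pos hε]

lemma of_geometric_radii {μ : Measure X} [IsFiniteMeasure μ] {r s C : ℝ} (hr₀ : 0 < r)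
    (hr₁ : r < 1) (hs : 0 ≤ s) (hC : 0 < C)
    (hball : ∀ (n : ℕ) (x : X), μ (ball x (r ^ n)) ≤ ENNReal.ofReal (C * (r ^ n) ^ s)) :
    UpperRegular μ s := by
  refine ⟨C / r ^ s + μ.real univ, by positivity, fun ε hε x => ?_⟩
  rcases le_or_gt ε 1 with hε₁ | hε₁
  · obtain ⟨n, hlt, hle⟩ := exists_nat_pow_near_of_lt_one hε hε₁ hr₀ hr₁
    refine (measure_mono (ball_subset_ball hle)).trans ((hball n x).trans ?_)
    apply ENNReal.ofReal_le_ofReal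
    calc C * (r ^ n) ^ s = C / r ^ s * (r ^ (n + 1)) ^ s := by
          rw [pow_succ, Real.mul_rpow (by positivity) hr₀.le]
          field_simp
      _ ≤ C / r ^ s * ε ^ s := by gcongr
      _ ≤ (C / r ^ s + μ.real univ) * ε ^ s := by
          gcongr
          exact le_add_of_nonneg_right measureReal_nonneg
  · refine (measure_mono (subset_univ _)).trans ?_
    rw [← ofReal_measureReal]
    apply ENNReal.ofReal_le_ofReal
    calc μ.real univ ≤ C / r ^ s + μ.real univ := le_add_of_nonneg_left (by positivity)
      _ ≤ (C / r ^ s + μ.real univ) * ε ^ s :=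
          le_mul_of_one_le_right (by positivity) (Real.one_le_rpow hε₁.le hs)

end UpperRegular

lemma upperRegular_volume_real : UpperRegular (volume : Measure ℝ) 1 :=
  ⟨2, two_pos, fun ε _ x => by rw [Real.volume_ball, Real.rpow_one]⟩

end UpperRegular

lemma mutuallySingular_pi {ι : Type*} [Fintype ι] {X : ι → Type*} [∀ i, MeasurableSpace (X i)]
    {μ ν : ∀ i, Measure (X i)} [∀ i, SigmaFinite (μ i)] [∀ i, SigmaFinite (ν i)] (i : ι)
    (h : μ i ⟂ₘ ν i) : Measure.pi μ ⟂ₘ Measure.pi ν :=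
  .mk (Measure.pi_eval_preimage_null μ h.measure_nullSet)
    (Measure.pi_eval_preimage_null ν h.measure_compl_nullSet)
    (by rw [← preimage_union, union_compl_self, preimage_univ])

lemma infinitePi_cylinder_eq_prod {X : ℕ → Type*} [∀ i, MeasurableSpace (X i)]
    [∀ i, MeasurableSingletonClass (X i)] (μ : ∀ i, Measure (X i))
    [∀ i, IsProbabilityMeasure (μ i)] (x : ∀ i, X i) (n : ℕ) :
    Measure.infinitePi μ (PiNat.cylinder x n) = ∏ i ∈ Finset.range n, μ i {x i} := by
  rw [PiNat.cylinder_eq_pi, Measure.infinitePi_pi _ fun i _ => measurableSet_singleton (x i)]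

section CantorMeasure

lemma volume_cantorSet : volume cantorSet = 0 := by
  have hthird : ∀ c : ℝ, volume (AffineMap.homothety c (3⁻¹ : ℝ) '' cantorSet) =
      ENNReal.ofReal 3⁻¹ * volume cantorSet := fun c => by
    rw [Measure.addHaar_image_homothety]
    norm_num
  have hunion : cantorSet = AffineMap.homothety (0 : ℝ) (3⁻¹ : ℝ) '' cantorSet ∪
      AffineMap.homothety (1 : ℝ) (3⁻¹ : ℝ) '' cantorSet := by
    convert cantorSet_eq_union_halves using 3 <;>
      simp only [AffineMap.homothety_apply, vsub_eq_sub, smul_eq_mul, vadd_eq_add] <;> ring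
  have hle : volume cantorSet ≤ ENNReal.ofReal (2 / 3) * volume cantorSet := by
    calc volume cantorSet
        ≤ ENNReal.ofReal 3⁻¹ * volume cantorSet + ENNReal.ofReal 3⁻¹ * volume cantorSet := by
          conv_lhs => rw [hunion]
          exact (measure_union_le _ _).trans_eq (by rw [hthird, hthird])
      _ = ENNReal.ofReal (2 / 3) * volume cantorSet := by
          rw [← add_mul, ← ENNReal.ofReal_add (by norm_num) (by norm_num)]
          norm_num
  by_contra hne
  refine hle.not_gt ?_
  conv_rhs => rw [← one_mul (volume cantorSet)]
  exact ENNReal.mul_lt_mul_left hne isCompact_cantorSet.measure_ne_top (by norm_num)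

/-- The coding `ω ↦ ∑ 2 ωₖ 3⁻⁽ᵏ⁺¹⁾` of the Cantor set by binary sequences, `true` standing for the
ternary digit `2`. -/
noncomputable def cantorMap (ω : ℕ → Bool) : ℝ :=
  Real.ofDigits fun k => cond (ω k) (2 : Fin 3) 0

lemma cantorMap_mem_cantorSet (ω : ℕ → Bool) : cantorMap ω ∈ cantorSet :=
  ofDigits_bool_to_fin_three_mem_cantorSet ω

lemma continuous_cantorMap : Continuous cantorMap :=
  Real.continuous_ofDigits.comp <| continuous_pi fun k =>
    (continuous_of_discreteTopology (f := fun b : Bool => cond b (2 : Fin 3) 0)).comp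
      (continuous_apply k)

lemma cantorMap_eq_cond_add_div (ω : ℕ → Bool) :
    cantorMap ω = cond (ω 0) (2 / 3) 0 + cantorMap (fun k => ω (k + 1)) / 3 := by
  rw [cantorMap, Real.ofDigits_eq_sum_add_ofDigits _ 1]
  cases h : ω 0 <;> simp [cantorMap, Real.ofDigitsTerm, h] <;> ring

lemma head_eq_of_dist_cantorMap_lt {ω ω' : ℕ → Bool}
    (h : dist (cantorMap ω') (cantorMap ω) < 1 / 3) : ω' 0 = ω 0 := by
  have htail (ω : ℕ → Bool) : cantorMap (fun k => ω (k + 1)) ∈ Icc 0 1 :=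
    cantorSet_subset_unitInterval (cantorMap_mem_cantorSet _)
  obtain ⟨hω₀, hω₁⟩ := htail ω
  obtain ⟨hω'₀, hω'₁⟩ := htail ω'
  rw [Real.dist_eq, abs_lt, cantorMap_eq_cond_add_div ω, cantorMap_eq_cond_add_div ω'] at h
  cases hω : ω 0 <;> cases hω' : ω' 0 <;> simp only [hω, hω', cond_true, cond_false] at h ⊢ <;>
    linarith

lemma mem_cylinder_of_dist_cantorMap_lt {n : ℕ} {ω ω' : ℕ → Bool}
    (h : dist (cantorMap ω') (cantorMap ω) < (1 / 3) ^ n) : ω' ∈ PiNat.cylinder ω n := by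
  induction n generalizing ω ω' with
  | zero => simp
  | succ n ih =>
    have hhead : ω' 0 = ω 0 := head_eq_of_dist_cantorMap_lt <|
      h.trans_le (pow_le_of_le_one (by norm_num) (by norm_num) n.succ_ne_zero)
    have hdist : dist (cantorMap ω') (cantorMap ω) =
        dist (cantorMap fun k => ω' (k + 1)) (cantorMap fun k => ω (k + 1)) / 3 := by
      rw [cantorMap_eq_cond_add_div ω, cantorMap_eq_cond_add_div ω', hhead, dist_add_left,
        Real.dist_eq, Real.dist_eq, ← sub_div, abs_div, abs_of_pos (three_pos : (0 : ℝ) < 3)]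
    have htail : (fun k => ω' (k + 1)) ∈ PiNat.cylinder (fun k => ω (k + 1)) n :=
      ih (by rw [hdist, pow_succ] at h; linarith)
    rintro (_ | k) hk
    · exact hhead
    · exact htail k (Nat.lt_of_succ_lt_succ hk)

/-- The Cantor–Lebesgue measure, as the law of a random point of the Cantor set whose ternary
digits are `0` or `2` according to independent fair coin flips. -/
noncomputable def cantorMeasure : Measure ℝ :=
  (Measure.infinitePi fun _ : ℕ => ProbabilityTheory.uniformOn (univ : Set Bool)).map cantorMap

instance : IsProbabilityMeasure cantorMeasure :=
  Measure.isProbabilityMeasure_map continuous_cantorMap.aemeasurable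

lemma mutuallySingular_cantorMeasure_volume : cantorMeasure ⟂ₘ volume := by
  refine .symm ⟨cantorSet, isClosed_cantorSet.measurableSet, volume_cantorSet, ?_⟩
  rw [cantorMeasure, Measure.map_apply continuous_cantorMap.measurable
    isClosed_cantorSet.measurableSet.compl]
  have hempty : cantorMap ⁻¹' cantorSetᶜ = ∅ :=
    eq_empty_of_forall_notMem fun ω hω => hω (cantorMap_mem_cantorSet ω)
  rw [hempty, measure_empty]

lemma cantorMeasure_ball_le (n : ℕ) (x : ℝ) :
    cantorMeasure (ball x ((1 / 3) ^ (n + 1))) ≤ ENNReal.ofReal ((1 / 2) ^ n) := by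
  rw [cantorMeasure, Measure.map_apply continuous_cantorMap.measurable measurableSet_ball]
  rcases (cantorMap ⁻¹' ball x ((1 / 3) ^ (n + 1))).eq_empty_or_nonempty with hempty | ⟨ω, hω⟩
  · rw [hempty, measure_empty]
    exact zero_le
  have hsub : cantorMap ⁻¹' ball x ((1 / 3) ^ (n + 1)) ⊆ PiNat.cylinder ω n := fun ω' hω' => by
    apply mem_cylinder_of_dist_cantorMap_lt
    calc dist (cantorMap ω') (cantorMap ω)
        ≤ dist (cantorMap ω') x + dist (cantorMap ω) x := dist_triangle_right _ _ _
      _ < (1 / 3) ^ (n + 1) + (1 / 3) ^ (n + 1) := add_lt_add hω' hω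
      _ ≤ (1 / 3) ^ n := by
          have : (0 : ℝ) < (1 / 3) ^ n := by positivity
          rw [pow_succ]
          linarith
  refine (measure_mono hsub).trans_eq ?_
  simp only [infinitePi_cylinder_eq_prod, ProbabilityTheory.uniformOn_univ,
    Measure.count_singleton, Fintype.card_bool, Finset.prod_const, Finset.card_range]
  rw [ENNReal.ofReal_pow (by norm_num), ENNReal.ofReal_div_of_pos two_pos, ENNReal.ofReal_one,
    ENNReal.ofReal_ofNat, Nat.cast_ofNat]

lemma one_third_pow_rpow_logb (n : ℕ) : ((1 / 3 : ℝ) ^ n) ^ Real.logb 3 2 = (1 / 2) ^ n := by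
  rw [← Real.rpow_pow_comm (by norm_num), one_div, Real.inv_rpow (by norm_num),
    Real.rpow_logb (by norm_num) (by norm_num) two_pos, one_div]

lemma upperRegular_cantorMeasure : UpperRegular cantorMeasure (Real.logb 3 2) := by
  refine .of_geometric_radii (r := 1 / 3) (C := 2) (by norm_num) (by norm_num)
    (Real.logb_nonneg (by norm_num) (by norm_num)) two_pos fun n x => ?_
  rw [one_third_pow_rpow_logb]
  cases n with
  | zero => exact prob_le_one.trans (by norm_num)
  | succ n =>
    refine (cantorMeasure_ball_le n x).trans_eq (congrArg _ ?_)
    ring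

end CantorMeasure

section CantorCube

variable {ι : Type*} [DecidableEq ι]

/-- The factors of `cantorCubeMeasure`: the Cantor–Lebesgue measure in the coordinate `i`, the
uniform measure on `[0, 1]` in the others. -/
noncomputable def cantorCubeFactor (i j : ι) : Measure ℝ :=
  if j = i then cantorMeasure else volume.restrict (Icc 0 1)

instance (i j : ι) : IsProbabilityMeasure (cantorCubeFactor i j) := by
  unfold cantorCubeFactor
  split_ifs
  · infer_instance
  · exact ⟨by simp⟩

lemma upperRegular_cantorCubeFactor (i j : ι) :
    UpperRegular (cantorCubeFactor i j) (1 - if j = i then 1 - Real.logb 3 2 else 0) := by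
  unfold cantorCubeFactor
  split_ifs
  · simpa using upperRegular_cantorMeasure
  · simpa using upperRegular_volume_real.mono Measure.restrict_le_self

variable [Fintype ι]

/-- The product of the Cantor–Lebesgue measure in the coordinate `i` with Lebesgue measure on the
unit cube in the remaining coordinates. -/
noncomputable def cantorCubeMeasure (i : ι) : Measure (EuclideanSpace ℝ ι) :=
  (Measure.pi (cantorCubeFactor i)).map (MeasurableEquiv.toLp 2 (ι → ℝ))

instance (i : ι) : IsProbabilityMeasure (cantorCubeMeasure i) :=
  Measure.isProbabilityMeasure_map (MeasurableEquiv.measurable _).aemeasurable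

lemma upperRegular_cantorCubeMeasure (i : ι) :
    UpperRegular (cantorCubeMeasure i) (Fintype.card ι - (1 - Real.logb 3 2)) := by
  have hpi := UpperRegular.pi (upperRegular_cantorCubeFactor i)
  simp only [Finset.sum_sub_distrib, Finset.sum_ite_eq', Finset.sum_const, Finset.card_univ,
    nsmul_eq_mul, mul_one, Finset.mem_univ, ↓reduceIte] at hpi
  exact hpi.map_measurableEquiv _ (PiLp.lipschitzWith_ofLp 2 _)

lemma mutuallySingular_cantorCubeMeasure_volume (i : ι) : cantorCubeMeasure i ⟂ₘ volume := by
  have hfactor : cantorCubeFactor i i ⟂ₘ volume := by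
    simpa [cantorCubeFactor] using mutuallySingular_cantorMeasure_volume
  rw [← (EuclideanSpace.volume_preserving_symm_measurableEquiv_toLp ι).symm.map_eq]
  exact (MeasurableEquiv.measurableEmbedding _).mutuallySingular_map
    (mutuallySingular_pi i hfactor)

end CantorCube

/-- for every n ≥ 1 there exists a probability measure on ℝⁿ satisfying the
(Lp) condition for some p > n while not being absolutely continuous with respect to
Lebesgue measure. -/
theorem stmt_16 (n : ℕ) (hn : 1 ≤ n) :
    ∃ (μ₀ : Measure (Euc n)) (p C : ℝ),
      IsProbabilityMeasure μ₀ ∧ (n : ℝ) < p ∧ 0 < C ∧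
      (∀ ε > (0:ℝ), ∀ x : Euc n,
        μ₀ (ball x ε) ≤ ENNReal.ofReal (C * ε ^ ((n : ℝ) * (1 - 1 / p)))) ∧
      ¬ μ₀ ≪ (volume : Measure (Euc n)) := by
  set α := Real.logb 3 2
  have hα₀ : 0 < α := Real.logb_pos (by norm_num) (by norm_num)
  have hα₁ : 0 < 1 - α := sub_pos.2 <|
    (Real.logb_lt_iff_lt_rpow (by norm_num) two_pos).2 (by norm_num)
  have hn₀ : (0 : ℝ) < n := by exact_mod_cast hn
  have hexponent : (n : ℝ) * (1 - 1 / (n / (1 - α))) = n - (1 - α) := by field_simp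
  obtain ⟨C, hC, hball⟩ := upperRegular_cantorCubeMeasure (⟨0, hn⟩ : Fin n)
  refine ⟨cantorCubeMeasure ⟨0, hn⟩, n / (1 - α), C, inferInstance, ?_, hC, ?_, fun hac => ?_⟩
  · rw [lt_div_iff₀ hα₁]
    nlinarith
  · simpa only [hexponent, Fintype.card_fin] using hball
  · exact IsProbabilityMeasure.ne_zero _ <|
      Measure.eq_zero_of_absolutelyContinuous_of_mutuallySingular hac
        (mutuallySingular_cantorCubeMeasure_volume _)
end

section
/- For every r ∈ [0, π], one has r·sin(2r) + 3·cos(2r) + 4r² − 3 ≥ 0. Equivalently, 2(r² − r sin r cos r) − 3(sin²r − r sin r cos r) ≥ 0 on [0, π]. -/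
open Set Real

/-!
The Cusa–Huygens inequality `3 sin r ≤ r (2 + cos r)` holds for `r ≥ 0`, because
`x - 3 sin x / (2 + cos x)` has derivative `((1 - cos x) / (2 + cos x)) ^ 2`. Up to a positive
factor, both quantities in the theorem are `2 r² + r sin r cos r - 3 sin² r`, and three times
this is `(r (2 + cos r) - 3 sin r) (2 r + 3 sin r) + 2 r² (1 - cos r)`, whose terms are nonnegative
for `r ≥ 0`; evenness in `r` covers the rest of the line.
-/

lemma two_add_cos_pos (x : ℝ) : 0 < 2 + cos x := by
  linarith [neg_one_le_cos x]

lemma hasDerivAt_sub_three_mul_sin_div_two_add_cos (x : ℝ) :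
    HasDerivAt (fun y ↦ y - 3 * sin y / (2 + cos y)) (((1 - cos x) / (2 + cos x)) ^ 2) x := by
  have hne : 2 + cos x ≠ 0 := (two_add_cos_pos x).ne'
  refine ((hasDerivAt_id' x).sub
    (((hasDerivAt_sin x).const_mul 3).div ((hasDerivAt_cos x).const_add 2) hne)).congr_deriv ?_
  field_simp
  linear_combination (-3) * sin_sq_add_cos_sq x

lemma monotone_sub_three_mul_sin_div_two_add_cos :
    Monotone fun x ↦ x - 3 * sin x / (2 + cos x) :=
  monotone_of_hasDerivAt_nonneg hasDerivAt_sub_three_mul_sin_div_two_add_cos fun _ ↦ sq_nonneg _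

lemma three_mul_sin_le_mul_two_add_cos {x : ℝ} (hx : 0 ≤ x) : 3 * sin x ≤ x * (2 + cos x) := by
  have h : 0 ≤ x - 3 * sin x / (2 + cos x) := by
    simpa using monotone_sub_three_mul_sin_div_two_add_cos hx
  rwa [sub_nonneg, div_le_iff₀ (two_add_cos_pos x)] at h

lemma two_mul_add_three_mul_sin_nonneg {x : ℝ} (hx : 0 ≤ x) : 0 ≤ 2 * x + 3 * sin x := by
  rcases le_total x π with hxπ | hπx
  · linarith [sin_nonneg_of_nonneg_of_le_pi hx hxπ]
  · linarith [neg_one_le_sin x, pi_gt_three]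

lemma three_mul_sin_sq_le_of_nonneg {x : ℝ} (hx : 0 ≤ x) :
    3 * sin x ^ 2 ≤ 2 * x ^ 2 + x * sin x * cos x := by
  have hprod : 0 ≤ (x * (2 + cos x) - 3 * sin x) * (2 * x + 3 * sin x) :=
    mul_nonneg (sub_nonneg.2 (three_mul_sin_le_mul_two_add_cos hx))
      (two_mul_add_three_mul_sin_nonneg hx)
  have hsq : 0 ≤ x ^ 2 * (1 - cos x) := mul_nonneg (sq_nonneg x) (sub_nonneg.2 (cos_le_one x))
  linarith

lemma three_mul_sin_sq_le (x : ℝ) : 3 * sin x ^ 2 ≤ 2 * x ^ 2 + x * sin x * cos x := by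
  rcases le_total 0 x with hx | hx
  · exact three_mul_sin_sq_le_of_nonneg hx
  · simpa using three_mul_sin_sq_le_of_nonneg (neg_nonneg.2 hx)

theorem stmt_18_general (r : ℝ) :
    0 ≤ r * sin (2 * r) + 3 * cos (2 * r) + 4 * r ^ 2 - 3 ∧
      0 ≤ 2 * (r ^ 2 - r * sin r * cos r) - 3 * (sin r ^ 2 - r * sin r * cos r) := by
  have h := three_mul_sin_sq_le r
  constructor
  · rw [sin_two_mul, cos_two_mul, cos_sq']
    linarith
  · linarith

/-- for r ∈ [0, π], r sin(2r) + 3 cos(2r) + 4r² − 3 ≥ 0; equivalently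
2(r² − r sin r cos r) − 3(sin²r − r sin r cos r) ≥ 0. -/
theorem stmt_18 :
    ∀ r ∈ Icc (0:ℝ) π,
      0 ≤ r * Real.sin (2 * r) + 3 * Real.cos (2 * r) + 4 * r ^ 2 - 3 ∧
      0 ≤ 2 * (r ^ 2 - r * Real.sin r * Real.cos r)
          - 3 * ((Real.sin r) ^ 2 - r * Real.sin r * Real.cos r) :=
  fun r _ ↦ stmt_18_general r
end

section
/- There exists a universal constant C₀ > 0 with the following property. Let m ≥ 2 and let α, β, v ∈ ℝ^m satisfy |v| = 1, v·β = 0, α·β = 0 and β ≠ 0. Set c := α·v, r(t) := |α + tβ|, and F(t) := (1 − r(t)·cos r(t)/sin r(t))·(1 − c²/r(t)²). Then for every t with 0 < r(t) < π, F is twice differentiable at t and F''(t) ≥ C₀ |β|². (This is the analytic core of the fact that the squared Riemannian distance on the round sphere satisfies the strict cost-curvature condition As.) -/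
open Set Real
open scoped RealInnerProductSpace

noncomputable section

/-- The function F(t) = (1 − r cos r / sin r)(1 − c²/r²) with r = |α + tβ| and c = α·v,
arising in the verification of condition As for the squared distance on the sphere. -/
noncomputable def sphereF {m : ℕ} (α β v : EuclideanSpace ℝ (Fin m)) (t : ℝ) : ℝ :=
  (1 - ‖α + t • β‖ * Real.cos ‖α + t • β‖ / Real.sin ‖α + t • β‖) *
    (1 - (⟪α, v⟫) ^ 2 / ‖α + t • β‖ ^ 2)

end

/-!
Write `s = r²`. Then `F = φ(s)` with `φ(s) = (s - c²) k(s)` and `k(s) = (1 - √s cot √s) / s`.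
The Mittag-Leffler expansion of the cotangent gives `k(s) = ∑ₙ 2 / (π² n² - s)` on `(0, π²)`, so
`k` is increasing and bounded below by its value `1/3` at `0`; hence `φ' ≥ k ≥ 1/3` where
`s ≥ c²`. Moreover `φ` is convex, because each `(s - c²) / (π² n² - s)` is. Since `s` is a quadratic
polynomial in `t` with second derivative `2|β|²`, the chain rule `F'' = φ'' s'² + φ' s''` yields
`F'' ≥ (2/3) |β|²`, as soon as `c² ≤ r²`.
-/

section Convexity

lemma convexOn_of_hasSum {ι E : Type*} [AddCommMonoid E] [Module ℝ E] {S : Set E}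
    {f : ι → E → ℝ} {g : E → ℝ} (hS : Convex ℝ S) (hf : ∀ i, ConvexOn ℝ S (f i))
    (hg : ∀ x ∈ S, HasSum (fun i ↦ f i x) (g x)) : ConvexOn ℝ S g :=
  ⟨hS, fun x hx y hy a b ha hb hab ↦
    hasSum_le (fun i ↦ (hf i).2 hx hy ha hb hab) (hg _ (hS hx hy ha hb hab))
      (((hg x hx).const_smul a).add ((hg y hy).const_smul b))⟩

lemma deriv_nonneg_of_monotoneOn {S : Set ℝ} {f : ℝ → ℝ} {x : ℝ} (hf : MonotoneOn f S)
    (hS : S ∈ nhds x) : 0 ≤ deriv f x := by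
  simpa only [derivWithin_of_mem_nhds hS] using hf.derivWithin_nonneg (x := x) (𝕜 := ℝ)

lemma deriv_deriv_nonneg_of_convexOn {S : Set ℝ} {f : ℝ → ℝ} {x : ℝ} (hf : ConvexOn ℝ S f)
    (hd : ∀ y ∈ S, DifferentiableAt ℝ f y) (hS : S ∈ nhds x) : 0 ≤ deriv (deriv f) x :=
  deriv_nonneg_of_monotoneOn (hf.monotoneOn_deriv hd) hS

lemma convexOn_sub_mul_two_div_sub {a d : ℝ} (hda : d ≤ a) :
    ConvexOn ℝ (Iio a) fun s ↦ (s - d) * (2 / (a - s)) := by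
  have hinv : ConvexOn ℝ (Iio a) fun s ↦ (a - s)⁻¹ := by
    have h := (convexOn_zpow (𝕜 := ℝ) (-1)).comp_affineMap
      (AffineMap.const ℝ ℝ a - AffineMap.id ℝ ℝ)
    refine (h.subset (fun s hs ↦ ?_) (convex_Iio a)).congr fun s _ ↦ ?_
    · simpa using hs
    · simp
  have hcoeff : 0 ≤ 2 * (a - d) := by linarith
  refine ((hinv.smul hcoeff).add_const (-2)).congr fun s hs ↦ ?_
  have : a - s ≠ 0 := (sub_pos.2 hs).ne'
  simp only [Pi.add_apply, smul_eq_mul]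
  field_simp
  ring

end Convexity

section CotQuotient

lemma hasSum_pi_mul_cot_pi_mul_sub_one_div {x : ℝ} (hx : ∀ k : ℤ, (k : ℝ) ≠ x) :
    HasSum (fun n : ℕ ↦ 1 / (x - (n + 1)) + 1 / (x + (n + 1)))
      (π * Real.cot (π * x) - 1 / x) := by
  have hx' : (x : ℂ) ∈ Complex.integerComplement := by
    rintro ⟨k, hk⟩
    exact hx k (by exact_mod_cast hk)
  have h := (summable_cotTerm hx').hasSum
  simp only [cotTerm, ← cot_series_rep' hx'] at h
  rw [← Complex.hasSum_ofReal]
  exact_mod_cast h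

/-- The function `k(s) = (1 - √s cot √s) / s`, which extends analytically to `(-∞, π²)`. The junk
value `k(0) = 0` is not the value `1/3` of that extension. -/
noncomputable def cotQuotient (s : ℝ) : ℝ := (1 - √s * Real.cot √s) / s

lemma sqrt_mem_Ioo_zero_pi {s : ℝ} (hs : s ∈ Ioo 0 (π ^ 2)) : √s ∈ Ioo 0 π :=
  ⟨Real.sqrt_pos.2 hs.1, (Real.sqrt_lt' Real.pi_pos).2 hs.2⟩

lemma pi_sq_le_pi_sq_mul_succ_sq (n : ℕ) : π ^ 2 ≤ π ^ 2 * ((n : ℝ) + 1) ^ 2 :=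
  le_mul_of_one_le_right (sq_nonneg π) (one_le_pow₀ (by simp))

lemma pi_sq_mul_succ_sq_sub_pos {s : ℝ} (hs : s < π ^ 2) (n : ℕ) :
    0 < π ^ 2 * ((n : ℝ) + 1) ^ 2 - s :=
  sub_pos.2 (hs.trans_le (pi_sq_le_pi_sq_mul_succ_sq n))

lemma intCast_ne_of_mem_Ioo_zero_one {x : ℝ} (hx : x ∈ Ioo 0 1) (k : ℤ) : (k : ℝ) ≠ x := by
  rintro rfl
  have h0 : 0 < k := by exact_mod_cast hx.1
  have h1 : k < 1 := by exact_mod_cast hx.2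
  omega

lemma hasSum_cotQuotient {s : ℝ} (hs : s ∈ Ioo 0 (π ^ 2)) :
    HasSum (fun n : ℕ ↦ 2 / (π ^ 2 * ((n : ℝ) + 1) ^ 2 - s)) (cotQuotient s) := by
  obtain ⟨r, hr, rfl⟩ : ∃ r ∈ Ioo 0 π, r ^ 2 = s :=
    ⟨√s, sqrt_mem_Ioo_zero_pi hs, Real.sq_sqrt hs.1.le⟩
  have hr0 : r ≠ 0 := hr.1.ne'
  have hx : r / π ∈ Ioo 0 1 := ⟨div_pos hr.1 Real.pi_pos, (div_lt_one Real.pi_pos).2 hr.2⟩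
  convert! (hasSum_pi_mul_cot_pi_mul_sub_one_div
    (intCast_ne_of_mem_Ioo_zero_one hx)).mul_left (-1 / (π * r)) using 1
  · funext n
    have hsq : π ^ 2 * ((n : ℝ) + 1) ^ 2 - r ^ 2 = (π * (n + 1) - r) * (π * (n + 1) + r) := by
      ring
    have hsub : r / π - (n + 1) = -(π * (n + 1) - r) / π := by field_simp; ring
    have hadd : r / π + (n + 1) = (π * (n + 1) + r) / π := by field_simp; ring
    obtain ⟨hsub_ne, hadd_ne⟩ := mul_ne_zero_iff.1
      (hsq ▸ (pi_sq_mul_succ_sq_sub_pos hs.2 n).ne')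
    rw [hsub, hadd, hsq]
    field_simp
    ring
  · rw [cotQuotient, Real.sqrt_sq hr.1.le, mul_div_cancel₀ r Real.pi_ne_zero]
    field_simp
    ring

lemma monotoneOn_cotQuotient : MonotoneOn cotQuotient (Ioo 0 (π ^ 2)) := by
  intro x hx y hy hxy
  refine hasSum_le (fun n ↦ ?_) (hasSum_cotQuotient hx) (hasSum_cotQuotient hy)
  have := pi_sq_mul_succ_sq_sub_pos hy.2 n
  gcongr

lemma hasSum_two_div_pi_sq_mul_succ_sq :
    HasSum (fun n : ℕ ↦ 2 / (π ^ 2 * ((n : ℝ) + 1) ^ 2)) (1 / 3) := by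
  have h := ((hasSum_nat_add_iff' 1).2 hasSum_zeta_two).mul_left (2 / π ^ 2)
  convert! h using 1
  · funext n
    push_cast
    field_simp
  · simp only [Finset.sum_range_one, Nat.cast_zero, ne_eq, two_ne_zero, not_false_eq_true,
      zero_pow, div_zero, sub_zero]
    field_simp
    norm_num

lemma one_third_le_cotQuotient {s : ℝ} (hs : s ∈ Ioo 0 (π ^ 2)) : 1 / 3 ≤ cotQuotient s := by
  refine hasSum_le (fun n ↦ ?_) hasSum_two_div_pi_sq_mul_succ_sq (hasSum_cotQuotient hs)
  have := pi_sq_mul_succ_sq_sub_pos hs.2 n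
  gcongr
  exact sub_le_self _ hs.1.le

lemma convexOn_sub_mul_cotQuotient {d : ℝ} (hd : d ≤ π ^ 2) :
    ConvexOn ℝ (Ioo 0 (π ^ 2)) fun s ↦ (s - d) * cotQuotient s := by
  refine convexOn_of_hasSum (convex_Ioo _ _) (fun n : ℕ ↦ ?_)
    fun s hs ↦ (hasSum_cotQuotient hs).mul_left (s - d)
  have hn := pi_sq_le_pi_sq_mul_succ_sq n
  exact (convexOn_sub_mul_two_div_sub (hd.trans hn)).subset
    (fun s hs ↦ hs.2.trans_le hn) (convex_Ioo _ _)

lemma contDiffAt_cotQuotient {s : ℝ} {n : WithTop ℕ∞} (hs : s ∈ Ioo 0 (π ^ 2)) :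
    ContDiffAt ℝ n cotQuotient s := by
  have hsin : Real.sin √s ≠ 0 := (Real.sin_pos_of_mem_Ioo (sqrt_mem_Ioo_zero_pi hs)).ne'
  have hsqrt : ContDiffAt ℝ n (fun s : ℝ ↦ √s) s := contDiffAt_id.sqrt hs.1.ne'
  unfold cotQuotient
  simp only [Real.cot_eq_cos_div_sin]
  exact (contDiffAt_const.sub (hsqrt.mul (hsqrt.cos.div hsqrt.sin hsin))).div
    contDiffAt_id hs.1.ne'

lemma contDiffAt_sub_mul_cotQuotient {d s : ℝ} {n : WithTop ℕ∞} (hs : s ∈ Ioo 0 (π ^ 2)) :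
    ContDiffAt ℝ n (fun s ↦ (s - d) * cotQuotient s) s :=
  (contDiffAt_id.sub contDiffAt_const).mul (contDiffAt_cotQuotient hs)

lemma one_third_le_deriv_sub_mul_cotQuotient {d s : ℝ} (hs : s ∈ Ioo 0 (π ^ 2)) (hds : d ≤ s) :
    1 / 3 ≤ deriv (fun s ↦ (s - d) * cotQuotient s) s := by
  have hdiff : DifferentiableAt ℝ cotQuotient s :=
    (contDiffAt_cotQuotient hs).differentiableAt one_ne_zero
  have hderiv : deriv (fun s ↦ (s - d) * cotQuotient s) s =
      cotQuotient s + (s - d) * deriv cotQuotient s := by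
    simpa using (((hasDerivAt_id s).sub_const d).fun_mul hdiff.hasDerivAt).deriv
  have hmono : 0 ≤ deriv cotQuotient s :=
    deriv_nonneg_of_monotoneOn monotoneOn_cotQuotient (isOpen_Ioo.mem_nhds hs)
  rw [hderiv]
  exact (one_third_le_cotQuotient hs).trans
    (le_add_of_nonneg_right (mul_nonneg (sub_nonneg.2 hds) hmono))

lemma deriv_deriv_sub_mul_cotQuotient_nonneg {d s : ℝ} (hs : s ∈ Ioo 0 (π ^ 2))
    (hd : d ≤ π ^ 2) : 0 ≤ deriv (deriv fun s ↦ (s - d) * cotQuotient s) s :=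
  deriv_deriv_nonneg_of_convexOn (convexOn_sub_mul_cotQuotient hd)
    (fun _ hy ↦ (contDiffAt_sub_mul_cotQuotient hy).differentiableAt one_ne_zero)
    (isOpen_Ioo.mem_nhds hs)

end CotQuotient

section SphereProfile

lemma deriv_deriv_comp {f g : ℝ → ℝ} {x : ℝ} (hg : ContDiffAt ℝ 2 g (f x))
    (hf : ContDiffAt ℝ 2 f x) :
    deriv (deriv (g ∘ f)) x =
      deriv (deriv g) (f x) * deriv f x ^ 2 + deriv g (f x) * deriv (deriv f) x := by
  simpa only [iteratedDeriv_succ, iteratedDeriv_zero] using iteratedDeriv_comp_two hg hf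

variable {E : Type*} [NormedAddCommGroup E] [InnerProductSpace ℝ E]

lemma deriv_deriv_norm_add_smul_sq (α β : E) (t : ℝ) :
    deriv (deriv fun u : ℝ ↦ ‖α + u • β‖ ^ 2) t = 2 * ‖β‖ ^ 2 := by
  have hline (u : ℝ) : HasDerivAt (fun u : ℝ ↦ α + u • β) β u := by
    simpa using ((hasDerivAt_id u).smul_const β).const_add α
  have hderiv : (deriv fun u : ℝ ↦ ‖α + u • β‖ ^ 2) = fun u ↦ 2 * ⟪α + u • β, β⟫ :=
    funext fun u ↦ (hline u).norm_sq.deriv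
  rw [hderiv, ← real_inner_self_eq_norm_sq]
  simpa using (((hline t).inner ℝ (hasDerivAt_const t β)).const_mul 2).deriv

lemma abs_inner_le_norm_add_smul {α β v : E} (hv : ‖v‖ = 1) (hvβ : ⟪v, β⟫ = 0) (t : ℝ) :
    |⟪α, v⟫| ≤ ‖α + t • β‖ := by
  have hinner : ⟪α + t • β, v⟫ = ⟪α, v⟫ := by
    rw [inner_add_left, real_inner_smul_left, real_inner_comm v β, hvβ, mul_zero, add_zero]
  simpa only [hinner, hv, mul_one] using abs_real_inner_le_norm (α + t • β) v

/-- The function `(1 - r cos r / sin r) (1 - c² / r²)` of `t`, where `r = ‖α + t β‖` and `c` is an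
arbitrary real number; `sphereF α β v` is the case `c = ⟪α, v⟫`. -/
noncomputable def sphereProfile (α β : E) (c t : ℝ) : ℝ :=
  (1 - ‖α + t • β‖ * Real.cos ‖α + t • β‖ / Real.sin ‖α + t • β‖) *
    (1 - c ^ 2 / ‖α + t • β‖ ^ 2)

variable {α β : E} {c t : ℝ}

lemma sphereProfile_eq_sub_mul_cotQuotient (ht : α + t • β ≠ 0) :
    sphereProfile α β c t = (‖α + t • β‖ ^ 2 - c ^ 2) * cotQuotient (‖α + t • β‖ ^ 2) := by
  have hr : ‖α + t • β‖ ≠ 0 := norm_ne_zero_iff.2 ht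
  rw [sphereProfile, cotQuotient, Real.sqrt_sq (norm_nonneg _), Real.cot_eq_cos_div_sin]
  field_simp

lemma sphereProfile_eventuallyEq (ht : α + t • β ≠ 0) :
    sphereProfile α β c =ᶠ[nhds t]
      (fun s ↦ (s - c ^ 2) * cotQuotient s) ∘ fun u ↦ ‖α + u • β‖ ^ 2 := by
  have hcont : Continuous fun u : ℝ ↦ α + u • β := by fun_prop
  filter_upwards [hcont.continuousAt.eventually_ne ht] with u hu
    using sphereProfile_eq_sub_mul_cotQuotient hu

theorem stmt_19_general (hc : |c| ≤ ‖α + t • β‖) (h0 : 0 < ‖α + t • β‖)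
    (hπ : ‖α + t • β‖ < π) :
    DifferentiableAt ℝ (sphereProfile α β c) t ∧
      DifferentiableAt ℝ (deriv (sphereProfile α β c)) t ∧
      2 / 3 * ‖β‖ ^ 2 ≤ deriv (deriv (sphereProfile α β c)) t := by
  have hs : ‖α + t • β‖ ^ 2 ∈ Ioo 0 (π ^ 2) := ⟨by positivity, by gcongr⟩
  have hcs : c ^ 2 ≤ ‖α + t • β‖ ^ 2 := sq_le_sq.2 (by rwa [abs_norm])
  have heq := sphereProfile_eventuallyEq (c := c) (norm_pos_iff.1 h0)
  have hφ : ContDiffAt ℝ 2 (fun s ↦ (s - c ^ 2) * cotQuotient s) (‖α + t • β‖ ^ 2) :=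
    contDiffAt_sub_mul_cotQuotient hs
  have hσ : ContDiffAt ℝ 2 (fun u : ℝ ↦ ‖α + u • β‖ ^ 2) t :=
    ContDiffAt.norm_sq ℝ (by fun_prop)
  have hF : ContDiffAt ℝ 2 (sphereProfile α β c) t := (hφ.comp t hσ).congr_of_eventuallyEq heq
  refine ⟨hF.differentiableAt two_ne_zero,
    (hF.derivWithin (m := 1) le_rfl).differentiableAt one_ne_zero, ?_⟩
  rw [heq.deriv.deriv_eq, deriv_deriv_comp (f := fun u : ℝ ↦ ‖α + u • β‖ ^ 2) hφ hσ,
    deriv_deriv_norm_add_smul_sq]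
  have hconvex := deriv_deriv_sub_mul_cotQuotient_nonneg hs (hcs.trans hs.2.le)
  have hslope := one_third_le_deriv_sub_mul_cotQuotient hs hcs
  calc 2 / 3 * ‖β‖ ^ 2 = 1 / 3 * (2 * ‖β‖ ^ 2) := by ring
    _ ≤ deriv (fun s ↦ (s - c ^ 2) * cotQuotient s) (‖α + t • β‖ ^ 2) * (2 * ‖β‖ ^ 2) := by
      gcongr
    _ ≤ _ := le_add_of_nonneg_left (mul_nonneg hconvex (sq_nonneg _))

end SphereProfile

/-- there is a universal constant C₀ > 0 such that for all m ≥ 2 and all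
α, β, v with |v| = 1, v ⟂ β, α ⟂ β, β ≠ 0, the function F is twice differentiable at every
t with 0 < |α + tβ| < π, and F''(t) ≥ C₀|β|². -/
theorem stmt_19 :
    ∃ C₀ : ℝ, 0 < C₀ ∧
      ∀ (m : ℕ), 2 ≤ m → ∀ α β v : EuclideanSpace ℝ (Fin m),
        ‖v‖ = 1 → ⟪v, β⟫ = 0 → ⟪α, β⟫ = 0 → β ≠ 0 →
        ∀ t : ℝ, 0 < ‖α + t • β‖ → ‖α + t • β‖ < π →
          DifferentiableAt ℝ (sphereF α β v) t ∧
          DifferentiableAt ℝ (deriv (sphereF α β v)) t ∧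
          C₀ * ‖β‖ ^ 2 ≤ deriv (deriv (sphereF α β v)) t := by
  exact ⟨2 / 3, by norm_num, fun _ _ _ _ _ hv hvβ _ _ t h0 hπ ↦
    stmt_19_general (abs_inner_le_norm_add_smul hv hvβ t) h0 hπ⟩
end
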